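/- Let F be a field of characteristic p ≥ t, and let R = F[x_1,...,x_{n+t-1}]/I_t(H) with H a t×n Hankel matrix, t ≤ n. Then R is F-rational; i.e., the ideal generated by some (equivalently, every) homogeneous system of parameters of R is tightly closed. In particular, for characteristic zero F, R has rational singularities. -/

import Mathlib

set_option synthInstance.maxHeartbeats 1000000
set_option maxHeartbeats 1000000

open MvPolynomial Matrix

/-- The `q`-th Frobenius power of an ideal: the ideal generated by `q`-th powers of its
elements. -/
def frobeniusPower {R : Type*} [CommRing R] (q : ℕ) (I : Ideal R) : Ideal R :=
  Ideal.span ((fun x => x ^ q) '' (I : Set R))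

/-!
Put `k = t - 1` and `M = n + k`. Modulo the Hankel minors every monomial is a combination of
monomials of degree at most `k` in the variables `x_k, …, x_{n-1}`, with coefficients in the
polynomial ring on the remaining `2k` end variables: among the terms of a minor the antidiagonal one
has the least quadratic weight, the sum of the squares of its indices, so it can be rewritten in
terms of heavier ones. These standard monomials stay linearly independent under the parametrization
`x_v ↦ ∑ j, a_j ^ (M - 1 - v) * b_j ^ v` by `k`-secants of the rational normal curve, which kills
the minors. Indeed the monomials whose support is covered by `k` disjoint pairs of consecutive
indices have linearly independent images, by comparison of leading exponents, and in each degree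
they are at least as many as the standard ones. Hence the Hankel ideal is the kernel of the
parametrization, and the quotient is free over the polynomial ring on the end variables.

The ideal of the end variables is tightly closed because it is contracted from a polynomial ring
over a perfect field: each monomial of degree at most `k` in `x_k, …, x_{n-1}` has an exponent in
its image which no other such monomial and no multiple of the image of an end variable involves, and
whose coefficient divides `k!`, hence is a unit since `k < p`. Regular sequences pass tight
closedness on to powers of the end variables, a leading form argument to monic polynomials in them,
and linkage from these to an arbitrary system of parameters.
-/

/-! ### Linkage -/

section Linkage

variable {R : Type*} [CommRing R]

/-- Davis' coset version of prime avoidance. -/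
theorem exists_add_notMem_of_isPrime (C : Ideal R) (f : R) (Ps : Finset (Ideal R))
    (hprime : ∀ P ∈ Ps, P.IsPrime) (havoid : ∀ P ∈ Ps, ¬ (f ∈ P ∧ C ≤ P)) :
    ∃ c ∈ C, ∀ P ∈ Ps, f + c ∉ P := by
  classical
  induction Ps using Finset.strongInduction with
  | H Ps ih =>
  rcases Ps.eq_empty_or_nonempty with rfl | hne
  · exact ⟨0, C.zero_mem, by simp⟩
  obtain ⟨P, hP⟩ := Ps.exists_minimal hne
  obtain ⟨c, hc, hcQ⟩ := ih (Ps.erase P) (Finset.erase_ssubset hP.1)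
    (fun Q hQ => hprime Q (Finset.mem_of_mem_erase hQ))
    (fun Q hQ => havoid Q (Finset.mem_of_mem_erase hQ))
  by_cases hcP : f + c ∈ P
  swap
  · refine ⟨c, hc, fun Q hQ => ?_⟩
    rcases eq_or_ne Q P with rfl | hne
    exacts [hcP, hcQ Q (Finset.mem_erase.mpr ⟨hne, hQ⟩)]
  have : P.IsPrime := hprime P hP.1
  have hprod : ¬ C * ∏ Q ∈ Ps.erase P, Q ≤ P := by
    rw [Ideal.IsPrime.mul_le this, not_or]
    refine ⟨fun hle => havoid P hP.1 ⟨?_, hle⟩, fun hle => ?_⟩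
    · simpa using P.sub_mem hcP (hle hc)
    · obtain ⟨Q, hQ, hQP⟩ := (Ideal.IsPrime.prod_le this).mp hle
      exact Finset.ne_of_mem_erase hQ
        (le_antisymm hQP (hP.2 (Finset.mem_of_mem_erase hQ) hQP))
  obtain ⟨d, hd, hdP⟩ := SetLike.not_le_iff_exists.mp hprod
  refine ⟨c + d, C.add_mem hc (Ideal.mul_le_left hd), fun Q hQ => ?_⟩
  rcases eq_or_ne Q P with rfl | hne
  · rwa [← add_assoc, Ideal.add_mem_iff_right _ hcP]
  · have hQ' := Finset.mem_erase.mpr ⟨hne, hQ⟩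
    have hdQ : d ∈ Q := Finset.inf_le (f := id) hQ' (Ideal.prod_le_inf (Ideal.mul_le_right hd))
    rw [← add_assoc, Ideal.add_mem_iff_left _ hdQ]
    exact hcQ Q hQ'

theorem isSMulRegular_iff_notMem_associatedPrimes [IsNoetherianRing R] {M : Type*}
    [AddCommGroup M] [Module R M] {a : R} :
    IsSMulRegular M a ↔ ∀ P ∈ associatedPrimes R M, a ∉ P := by
  have hzd := Set.ext_iff.mp (biUnion_associatedPrimes_eq_zero_divisors R M) a
  simp only [Set.mem_iUnion, SetLike.mem_coe, exists_prop] at hzd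
  rw [isSMulRegular_iff_right_eq_zero_of_smul]
  refine ⟨fun h P hP haP => ?_, fun h x hx => ?_⟩
  · obtain ⟨x, hx, hax⟩ := hzd.mp ⟨P, hP, haP⟩
    exact hx (h x hax)
  · by_contra hx0
    obtain ⟨P, hP, haP⟩ := hzd.mpr ⟨x, hx0, hx⟩
    exact h P hP haP

theorem le_of_mem_associatedPrimes_quotient {I P : Ideal R} (hP : P ∈ associatedPrimes R (R ⧸ I)) :
    I ≤ P := by
  have h := (AssociatedPrimes.mem_iff.mp hP).annihilator_le
  rwa [Submodule.annihilator_top, Ideal.annihilator_quotient] at h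

theorem exists_add_isSMulRegular [IsNoetherianRing R] {ι : Type*} [Finite ι] (q : ι → Ideal R)
    (C : Ideal R) (f : R)
    (hq : ∀ i, ∃ g ∈ q i ⊔ (Ideal.span {f} ⊔ C), IsSMulRegular (R ⧸ q i) g) :
    ∃ c ∈ C, ∀ i, IsSMulRegular (R ⧸ q i) (f + c) := by
  have hfin : (⋃ i, associatedPrimes R (R ⧸ q i)).Finite :=
    Set.finite_iUnion fun i => associatedPrimes.finite R (R ⧸ q i)
  obtain ⟨c, hc, hcP⟩ := exists_add_notMem_of_isPrime C f hfin.toFinset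
    (fun P hP => by
      obtain ⟨i, hi⟩ := Set.mem_iUnion.mp (hfin.mem_toFinset.mp hP)
      exact hi.isPrime)
    (fun P hP ⟨hfP, hCP⟩ => by
      obtain ⟨i, hi⟩ := Set.mem_iUnion.mp (hfin.mem_toFinset.mp hP)
      obtain ⟨g, hg, hreg⟩ := hq i
      refine isSMulRegular_iff_notMem_associatedPrimes.mp hreg P hi ?_
      exact sup_le (le_of_mem_associatedPrimes_quotient hi)
        (sup_le ((Ideal.span_singleton_le_iff_mem P).mpr hfP) hCP) hg)
  refine ⟨c, hc, fun i => isSMulRegular_iff_notMem_associatedPrimes.mpr fun P hP => hcP P ?_⟩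
  exact hfin.mem_toFinset.mpr (Set.mem_iUnion.mpr ⟨i, hP⟩)

theorem mem_sup_span_singleton_iff {I : Ideal R} {a z : R} :
    z ∈ I ⊔ Ideal.span {a} ↔ ∃ w, z - a * w ∈ I := by
  rw [sup_comm, Ideal.mem_span_singleton_sup]
  constructor
  · rintro ⟨w, b, hb, rfl⟩
    exact ⟨w, by rwa [mul_comm a, add_sub_cancel_left]⟩
  · rintro ⟨w, hw⟩
    exact ⟨w, _, hw, by ring⟩

theorem isSMulRegular_quotient_sup_span_swap {I : Ideal R} {a u : R}
    (ha : IsSMulRegular (R ⧸ I) a) (hu : IsSMulRegular (R ⧸ I ⊔ Ideal.span {a}) u) :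
    IsSMulRegular (R ⧸ I ⊔ Ideal.span {u}) a := by
  rw [isSMulRegular_quotient_iff_mem_of_smul_mem] at ha hu ⊢
  simp only [smul_eq_mul] at ha hu ⊢
  intro r hr
  obtain ⟨z, hz⟩ := mem_sup_span_singleton_iff.mp hr
  have huz : u * z ∈ I ⊔ Ideal.span {a} :=
    mem_sup_span_singleton_iff.mpr ⟨r, by simpa using I.neg_mem hz⟩
  obtain ⟨w, hw⟩ := mem_sup_span_singleton_iff.mp (hu z huz)
  refine mem_sup_span_singleton_iff.mpr ⟨w, ha _ ?_⟩
  convert I.add_mem hz (I.mul_mem_left u hw) using 1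
  ring

theorem colon_colon_le_colon_colon {I J : Ideal R} {a u : R} (haJ : a ∈ J)
    (ha : IsSMulRegular (R ⧸ I) a) (hu : IsSMulRegular (R ⧸ I) u) :
    (I ⊔ Ideal.span {a}).colon ((I ⊔ Ideal.span {a}).colon (J : Set R) : Set R) ≤
      (I ⊔ Ideal.span {u}).colon ((I ⊔ Ideal.span {u}).colon (J : Set R) : Set R) := by
  rw [isSMulRegular_quotient_iff_mem_of_smul_mem] at ha hu
  intro x hx
  simp only [Submodule.mem_colon, SetLike.mem_coe, smul_eq_mul] at ha hu hx ⊢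
  intro y hy
  obtain ⟨z, hz⟩ := mem_sup_span_singleton_iff.mp (hy a haJ)
  have hxz : x * z ∈ I ⊔ Ideal.span {a} := by
    refine hx z fun j hj => ?_
    obtain ⟨w, hw⟩ := mem_sup_span_singleton_iff.mp (hy j hj)
    rw [mem_sup_span_singleton_iff]
    refine ⟨w, hu _ ?_⟩
    convert I.sub_mem (I.mul_mem_left a hw) (I.mul_mem_left j hz) using 1
    ring
  obtain ⟨v, hv⟩ := mem_sup_span_singleton_iff.mp hxz
  refine mem_sup_span_singleton_iff.mpr ⟨v, ha _ ?_⟩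
  convert I.add_mem (I.mul_mem_left x hz) (I.mul_mem_left u hv) using 1
  ring

theorem span_image_Iio_succ (g : ℕ → R) (i : ℕ) :
    Ideal.span (g '' Set.Iio (i + 1)) = Ideal.span (g '' Set.Iio i) ⊔ Ideal.span {g i} := by
  rw [← Ideal.span_union, Set.union_singleton, ← Set.image_insert_eq]
  congr 2
  ext j
  simp only [Set.mem_Iio, Set.mem_insert_iff]
  lia

theorem span_range_fin_succ {d : ℕ} (f : Fin (d + 1) → R) :
    Ideal.span (Set.range f) = Ideal.span {f 0} ⊔ Ideal.span (Set.range (Fin.tail f)) := by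
  conv_lhs => rw [← Fin.cons_self_tail f, Fin.range_cons, Ideal.span_insert]

theorem span_singleton_add_sup {C : Ideal R} {f c : R} (hc : c ∈ C) :
    Ideal.span {f + c} ⊔ C = Ideal.span {f} ⊔ C := by
  apply le_antisymm <;>
    refine sup_le ((Ideal.span_singleton_le_iff_mem _).mpr ?_) le_sup_right
  · exact add_mem (Ideal.mem_sup_left (Ideal.mem_span_singleton_self f)) (Ideal.mem_sup_right hc)
  · rw [Ideal.mem_span_singleton_sup]
    exact ⟨1, -c, C.neg_mem hc, by ring⟩

/-- Linkage. The sequence `f` is exchanged for `g` one element at a time, after a general change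
of generators; `b` collects the elements exchanged so far. -/
theorem colon_colon_le_of_isSMulRegular [IsNoetherianRing R] {d : ℕ} (b : Ideal R)
    (f : Fin d → R) (g : ℕ → R)
    (hreg : ∀ i < d, IsSMulRegular (R ⧸ b ⊔ Ideal.span (g '' Set.Iio i)) (g i))
    (hgf : ∀ i < d, g i ∈ b ⊔ Ideal.span (Set.range f)) :
    (b ⊔ Ideal.span (g '' Set.Iio d)).colon ((b ⊔ Ideal.span (g '' Set.Iio d)).colon
      ((b ⊔ Ideal.span (Set.range f) : Ideal R) : Set R) : Set R) ≤
      b ⊔ Ideal.span (Set.range f) := by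
  induction d generalizing b with
  | zero =>
    intro x hx
    simp only [Submodule.mem_colon, SetLike.mem_coe, smul_eq_mul] at hx
    simpa using hx 1 fun z hz => by simpa using hz
  | succ d ih =>
    set J := b ⊔ Ideal.span (Set.range f) with hJ
    obtain ⟨c, hc, hu⟩ := exists_add_isSMulRegular
      (fun i : Fin (d + 1) => b ⊔ Ideal.span (g '' Set.Iio (i : ℕ)))
      (Ideal.span (Set.range (Fin.tail f))) (f 0) fun i => by
        refine ⟨g i, ?_, hreg i i.2⟩
        rw [← span_range_fin_succ]
        exact sup_le_sup_right (le_sup_left (a := b)) _ (hgf i i.2)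
    set u := f 0 + c
    have hJu : J = b ⊔ Ideal.span {u} ⊔ Ideal.span (Set.range (Fin.tail f)) := by
      rw [hJ, span_range_fin_succ, sup_assoc, span_singleton_add_sup hc]
    have hswap (i : ℕ) : b ⊔ Ideal.span {u} ⊔ Ideal.span (g '' Set.Iio i) =
      b ⊔ Ideal.span (g '' Set.Iio i) ⊔ Ideal.span {u} := sup_right_comm ..
    have hsucc (i : ℕ) : b ⊔ Ideal.span (g '' Set.Iio (i + 1)) =
      b ⊔ Ideal.span (g '' Set.Iio i) ⊔ Ideal.span {g i} := by
      rw [span_image_Iio_succ, sup_assoc]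
    have ih' := ih (b ⊔ Ideal.span {u}) (Fin.tail f)
      (fun i hi => by
        rw [hswap]
        refine isSMulRegular_quotient_sup_span_swap (hreg i (by lia)) ?_
        rw [← hsucc]
        exact hu ⟨i + 1, by lia⟩)
      (fun i hi => by rw [← hJu]; exact hgf i (by lia))
    rw [← hJu, hswap] at ih'
    rw [hsucc]
    exact (colon_colon_le_colon_colon (hgf d (by lia)) (hreg d (by lia))
      (hu (Fin.last d))).trans ih'

end Linkage

/-! ### Tight closure in polynomial rings -/

section TightClosure

theorem frobeniusPower_eq_map {R : Type*} [CommRing R] (p : ℕ) [ExpChar R p] (e : ℕ)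
    (I : Ideal R) : frobeniusPower (p ^ e) I = I.map (iterateFrobenius R p e) := rfl

theorem frobeniusPower_span {R : Type*} [CommRing R] (p : ℕ) [ExpChar R p] (e : ℕ) (s : Set R) :
    frobeniusPower (p ^ e) (Ideal.span s) = Ideal.span ((· ^ p ^ e) '' s) := by
  rw [frobeniusPower_eq_map, Ideal.map_span]
  rfl

theorem map_frobeniusPower {R S : Type*} [CommRing R] [CommRing S] (p : ℕ) [ExpChar R p]
    [ExpChar S p] (e : ℕ) (φ : R →+* S) (I : Ideal R) :
    (frobeniusPower (p ^ e) I).map φ = frobeniusPower (p ^ e) (I.map φ) := by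
  rw [frobeniusPower_eq_map, frobeniusPower_eq_map, Ideal.map_map, Ideal.map_map]
  congr 1
  ext x
  simp [iterateFrobenius_def]

variable {σ R : Type*} [CommRing R]

theorem add_nsmul_right_injective {q : ℕ} (hq : 0 < q) (α : σ →₀ ℕ) :
    Function.Injective fun β : σ →₀ ℕ => α + q • β := fun β γ h => by
  ext i
  have := DFunLike.congr_fun h i
  simpa [hq.ne'] using this

/-- Extraction of the monomials whose exponent has the form `α + q β`: the map
`∑ c_m X ^ m ↦ ∑ c_{α + q β} X ^ β`. For `α < q` it is linear over the polynomials in the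
`X_i ^ q`. -/
noncomputable def extractMonomials {q : ℕ} (hq : 0 < q) (α : σ →₀ ℕ) :
    MvPolynomial σ R →ₗ[R] MvPolynomial σ R :=
  (basisMonomials σ R).repr.symm.toLinearMap ∘ₗ
    Finsupp.lcomapDomain _ (add_nsmul_right_injective hq α) ∘ₗ
    (basisMonomials σ R).repr.toLinearMap

theorem coeff_extractMonomials {q : ℕ} (hq : 0 < q) (α β : σ →₀ ℕ) (u : MvPolynomial σ R) :
    coeff β (extractMonomials hq α u) = coeff (α + q • β) u := rfl

theorem extractMonomials_mul_expand {q : ℕ} (hq : 0 < q) {α : σ →₀ ℕ} (hα : ∀ i, α i < q)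
    (u v : MvPolynomial σ R) :
    extractMonomials hq α (u * expand q v) = extractMonomials hq α u * v := by
  induction v using MvPolynomial.induction_on' with
  | add v w hv hw => rw [map_add, mul_add, map_add, hv, hw, mul_add]
  | monomial γ a =>
    ext β
    have hle : q • γ ≤ α + q • β ↔ γ ≤ β := by
      refine ⟨fun h i => ?_, fun h => le_add_left (nsmul_le_nsmul_right h q)⟩
      have h1 : q * γ i ≤ α i + q * β i := by simpa using h i
      refine Nat.lt_succ_iff.mp (Nat.lt_of_mul_lt_mul_left (a := q) ?_)
      linarith [hα i, Nat.mul_succ q (β i)]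
    rw [expand_monomial, coeff_extractMonomials, coeff_mul_monomial', coeff_mul_monomial']
    simp only [hle]
    split_ifs with h
    · obtain ⟨δ, rfl⟩ := exists_add_of_le h
      rw [coeff_extractMonomials, add_tsub_cancel_left, smul_add, ← add_assoc,
        add_right_comm, add_tsub_cancel_right]
    · rfl

theorem extractMonomials_mem {q : ℕ} (hq : 0 < q) {α : σ →₀ ℕ} (hα : ∀ i, α i < q)
    {J : Ideal (MvPolynomial σ R)} {u : MvPolynomial σ R} (hu : u ∈ J.map (expand q)) :
    extractMonomials hq α u ∈ J := by
  obtain ⟨n, r, g, rfl⟩ := Submodule.mem_span_set'.mp hu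
  rw [map_sum]
  refine sum_mem fun i _ => ?_
  obtain ⟨v, hv, hvg⟩ := (g i).2
  rw [smul_eq_mul, ← hvg]
  exact (extractMonomials_mul_expand hq hα (r i) v).symm ▸ J.mul_mem_left _ hv

theorem extractMonomials_of_degreeOf_lt {q : ℕ} (hq : 0 < q) (α : σ →₀ ℕ)
    {c : MvPolynomial σ R} (hc : ∀ i, degreeOf i c < q) :
    extractMonomials hq α c = C (coeff α c) := by
  classical
  ext β
  rw [coeff_extractMonomials, coeff_C]
  split_ifs with h
  · rw [← h, smul_zero, add_zero]
  · obtain ⟨i, hi⟩ : ∃ i, β i ≠ 0 := by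
      simpa [Finsupp.ext_iff] using Ne.symm h
    rw [← notMem_support_iff]
    refine fun hm => (hc i).not_ge (le_trans ?_ (monomial_le_degreeOf i hm))
    exact le_add_left (Nat.le_mul_of_pos_right q (Nat.pos_of_ne_zero hi))

/-- Compare coefficients at an exponent of `c` in `c x ^ q ∈ I^{[q]}`, with `q` larger than the
degree of `c`. -/
theorem mem_of_frequently_mul_pow_mem_frobeniusPower {K : Type*} [Field K] (p : ℕ)
    [Fact p.Prime] [CharP K p] [PerfectRing K p] {I : Ideal (MvPolynomial σ K)}
    {c x : MvPolynomial σ K} (hc : c ≠ 0)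
    (h : ∃ᶠ e in Filter.atTop, c * x ^ p ^ e ∈ frobeniusPower (p ^ e) I) : x ∈ I := by
  obtain ⟨e, he, hx⟩ := Filter.frequently_atTop.mp h c.totalDegree
  have hq : 0 < p ^ e := pow_pos (Fact.out : p.Prime).pos e
  have hdeg (i : σ) : degreeOf i c < p ^ e :=
    ((degreeOf_le_totalDegree c i).trans he).trans_lt (Nat.lt_pow_self (Fact.out : p.Prime).one_lt)
  obtain ⟨α, hα⟩ := ne_zero_iff.mp hc
  have hαq (i : σ) : α i < p ^ e :=
    (degreeOf_lt_iff hq).mp (hdeg i) α (mem_support_iff.mpr hα)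
  set φ : MvPolynomial σ K →+* MvPolynomial σ K := map (iterateFrobenius K p e)
  have hφ : Function.Bijective φ := (mapEquiv σ (iterateFrobeniusEquiv K p e)).bijective
  have hpow (u : MvPolynomial σ K) : u ^ p ^ e = expand (p ^ e) (φ u) := by
    rw [← map_iterateFrobenius_expand, map_expand]
  have hI : frobeniusPower (p ^ e) I ≤ (I.map φ).map (expand (p ^ e)) := by
    rw [frobeniusPower, Ideal.span_le]
    rintro _ ⟨u, hu, rfl⟩
    simp only [hpow]
    exact Ideal.mem_map_of_mem _ (Ideal.mem_map_of_mem φ hu)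
  have hx' := extractMonomials_mem hq hαq (hI hx)
  rw [hpow, extractMonomials_mul_expand hq hαq, extractMonomials_of_degreeOf_lt hq α hdeg] at hx'
  have hφx : φ x ∈ I.map φ := by
    have := Ideal.mul_mem_left _ (C (coeff α c)⁻¹) hx'
    rwa [← mul_assoc, ← C_mul, inv_mul_cancel₀ hα, C_1, one_mul] at this
  rwa [← Ideal.mem_comap, Ideal.comap_map_of_bijective φ hφ] at hφx

end TightClosure

/-! ### Tightly closed ideals -/

section IsTightlyClosed

variable {R : Type*} [CommRing R] {p : ℕ}

/-- `I` is tightly closed in characteristic `p`. The condition `c x ^ q ∈ I^{[q]}` is only demanded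
for infinitely many `q = p ^ e`, so this is stronger than the usual notion. -/
def IsTightlyClosed (p : ℕ) (I : Ideal R) : Prop :=
  ∀ c x : R, c ≠ 0 →
    (∃ᶠ e in Filter.atTop, c * x ^ p ^ e ∈ frobeniusPower (p ^ e) I) → x ∈ I

theorem isTightlyClosed_top : IsTightlyClosed p (⊤ : Ideal R) := fun _ _ _ _ => trivial

theorem pow_mem_frobeniusPower {I : Ideal R} {x : R} (hx : x ∈ I) (q : ℕ) :
    x ^ q ∈ frobeniusPower q I :=
  Ideal.subset_span ⟨x, hx, rfl⟩

theorem frobeniusPower_mono {I J : Ideal R} (h : I ≤ J) (q : ℕ) :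
    frobeniusPower q I ≤ frobeniusPower q J :=
  Ideal.span_mono (Set.image_mono h)

theorem frobeniusPower_sup_span_singleton (p : ℕ) [ExpChar R p] (e : ℕ) (I : Ideal R) (a : R) :
    frobeniusPower (p ^ e) (I ⊔ Ideal.span {a}) =
      frobeniusPower (p ^ e) I ⊔ Ideal.span {a ^ p ^ e} := by
  rw [frobeniusPower_eq_map, frobeniusPower_eq_map, Ideal.map_sup, Ideal.map_span,
    Set.image_singleton, iterateFrobenius_def]

theorem IsTightlyClosed.of_colon_colon_le {I J : Ideal R} (hJ : IsTightlyClosed p J)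
    (h : J.colon (J.colon (I : Set R) : Set R) ≤ I) : IsTightlyClosed p I := by
  intro c x hc hx
  refine h (Submodule.mem_colon.mpr fun y hy => hJ c _ hc (hx.mono fun e he => ?_))
  have hmul : ∀ u ∈ frobeniusPower (p ^ e) I, u * y ^ p ^ e ∈ frobeniusPower (p ^ e) J := by
    intro u hu
    refine (Ideal.span_le (I := (frobeniusPower (p ^ e) J).colon {y ^ p ^ e})).mpr ?_ hu |>
      Submodule.mem_colon_singleton.mp
    rintro _ ⟨z, hz, rfl⟩
    refine Submodule.mem_colon_singleton.mpr ?_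
    rw [smul_eq_mul, ← mul_pow, mul_comm]
    exact pow_mem_frobeniusPower (Submodule.mem_colon.mp hy z hz) _
  rw [smul_eq_mul, mul_pow, ← mul_assoc]
  exact hmul _ he

theorem IsTightlyClosed.of_map {S : Type*} [CommRing S] [ExpChar R p] [ExpChar S p] {φ : R →+* S}
    (hφ : Function.Injective φ) {I : Ideal R} (hI : IsTightlyClosed p (I.map φ))
    (hcomap : (I.map φ).comap φ ≤ I) : IsTightlyClosed p I := by
  intro c x hc hx
  refine hcomap (hI (φ c) (φ x) ((map_ne_zero_iff φ hφ).mpr hc) (hx.mono fun e he => ?_))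
  rw [← map_pow, ← map_mul, ← map_frobeniusPower]
  exact Ideal.mem_map_of_mem φ he

theorem IsTightlyClosed.sup_span_mul [ExpChar R p] {I : Ideal R} {g h : R}
    (hg : IsTightlyClosed p (I ⊔ Ideal.span {g})) (hh : IsTightlyClosed p (I ⊔ Ideal.span {h}))
    (hreg : ∀ e, IsSMulRegular (R ⧸ frobeniusPower (p ^ e) I) (g ^ p ^ e)) :
    IsTightlyClosed p (I ⊔ Ideal.span {g * h}) := by
  intro c x hc hx
  obtain ⟨w, hw⟩ := mem_sup_span_singleton_iff.mp <| hg c x hc <| hx.mono fun e he =>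
    frobeniusPower_mono (sup_le_sup_left (Ideal.span_singleton_le_span_singleton.mpr
      (dvd_mul_right g h)) I) _ he
  have hwh : w ∈ I ⊔ Ideal.span {h} := by
    refine hh c w hc (hx.mono fun e he => ?_)
    rw [frobeniusPower_sup_span_singleton, mem_sup_span_singleton_iff] at he ⊢
    obtain ⟨r, hr⟩ := he
    refine ⟨r, (isSMulRegular_quotient_iff_mem_of_smul_mem _ _).mp (hreg e) _ ?_⟩
    have hxw := Ideal.mul_mem_left _ c (pow_mem_frobeniusPower hw (p ^ e))
    rw [sub_pow_expChar_pow, mul_pow] at hxw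
    convert Ideal.sub_mem _ hr hxw using 1
    rw [smul_eq_mul]
    ring
  obtain ⟨r, hr⟩ := mem_sup_span_singleton_iff.mp hwh
  refine mem_sup_span_singleton_iff.mpr ⟨r, ?_⟩
  convert I.add_mem hw (I.mul_mem_left g hr) using 1
  ring

theorem IsTightlyClosed.sup_span_pow [ExpChar R p] {I : Ideal R} {g : R}
    (hg : IsTightlyClosed p (I ⊔ Ideal.span {g}))
    (hreg : ∀ e, IsSMulRegular (R ⧸ frobeniusPower (p ^ e) I) g) (n : ℕ) :
    IsTightlyClosed p (I ⊔ Ideal.span {g ^ n}) := by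
  induction n with
  | zero => simpa using isTightlyClosed_top
  | succ n ih =>
    rw [pow_succ']
    exact hg.sup_span_mul ih fun e => (hreg e).pow _

theorem frobeniusPower_span_image_pow [ExpChar R p] {ι : Type*} (e : ℕ) (y : ι → R) (K : ι → ℕ)
    (s : Set ι) : frobeniusPower (p ^ e) (Ideal.span ((fun v => y v ^ K v) '' s)) =
      Ideal.span ((fun v => y v ^ (K v * p ^ e)) '' s) := by
  rw [frobeniusPower_span, Set.image_image]
  simp only [pow_mul]

theorem IsTightlyClosed.span_image_pow [ExpChar R p] {ι : Type*} [DecidableEq ι] {J : Finset ι}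
    {y : ι → R} (hy : IsTightlyClosed p (Ideal.span (y '' J)))
    (hreg : ∀ (K : ι → ℕ), ∀ w ∈ J,
      IsSMulRegular (R ⧸ Ideal.span ((fun v => y v ^ K v) '' (J.erase w))) (y w))
    (K : ι → ℕ) : IsTightlyClosed p (Ideal.span ((fun v => y v ^ K v) '' J)) := by
  suffices h : ∀ T ⊆ J, IsTightlyClosed p
      (Ideal.span ((fun v => y v ^ T.piecewise K 1 v) '' J)) by
    have hK : (fun v => y v ^ J.piecewise K 1 v) '' J = (fun v => y v ^ K v) '' J :=
      Set.image_congr fun v hv => by rw [Finset.piecewise_eq_of_mem _ _ _ hv]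
    exact hK ▸ h J subset_rfl
  intro T hT
  induction T using Finset.induction_on with
  | empty => simpa using hy
  | insert w T hwT ih =>
    have hwJ : w ∈ J := hT (Finset.mem_insert_self w T)
    have hsplit (L : ι → ℕ) : Ideal.span ((fun v => y v ^ L v) '' J) =
        Ideal.span ((fun v => y v ^ L v) '' (J.erase w)) ⊔ Ideal.span {y w ^ L w} := by
      conv_lhs => rw [← Finset.insert_erase hwJ, Finset.coe_insert, Set.image_insert_eq,
        Ideal.span_insert, sup_comm]
    have herase : (fun v => y v ^ (insert w T).piecewise K 1 v) '' (J.erase w) =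
        (fun v => y v ^ T.piecewise K 1 v) '' (J.erase w) :=
      Set.image_congr fun v hv => by
        simp only [Finset.piecewise_insert_of_ne, ne_eq, Finset.ne_of_mem_erase hv,
          not_false_eq_true]
    have hT' := ih ((Finset.subset_insert w T).trans hT)
    rw [hsplit, Finset.piecewise_eq_of_notMem _ _ _ hwT, Pi.one_apply, pow_one] at hT'
    rw [hsplit, herase, Finset.piecewise_insert_self]
    refine hT'.sup_span_pow (fun e => ?_) _
    rw [frobeniusPower_span_image_pow]
    exact hreg _ w hwJ

end IsTightlyClosed

/-! ### Division by monic polynomials in separate variables -/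

section Remainder

variable {V R : Type*} [CommRing R]

theorem coeff_prod_toMvPolynomial [Fintype V] (q : V → Polynomial R) (m : V →₀ ℕ) :
    coeff m (∏ v, (q v).toMvPolynomial v) = ∏ v, (q v).coeff (m v) := by
  classical
  have h : (lcoeff R m).compMultilinearMap ((MultilinearMap.mkPiAlgebra R V _).compLinearMap
        fun v => (Polynomial.toMvPolynomial v).toLinearMap) =
      (MultilinearMap.mkPiAlgebra R V R).compLinearMap fun v => Polynomial.lcoeff R (m v) := by
    refine Module.Basis.ext_multilinear (fun _ => Polynomial.basisMonomials R) fun i => ?_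
    have hi : ∏ v, (X v : MvPolynomial V R) ^ i v =
        monomial (Finsupp.equivFunOnFinite.symm i) 1 := by
      rw [monomial_eq, C_1, one_mul, Finsupp.prod_fintype _ _ fun _ => pow_zero _]
      rfl
    simp [Polynomial.coeff_monomial, Polynomial.toMvPolynomial, hi, coeff_monomial,
      Finset.prod_ite_zero, Finsupp.ext_iff]
  exact congr($h q)

variable [DecidableEq V] (S : Finset V) (G : V → Polynomial R)

/-- The remainder of a polynomial in one variable `v` on division by `G v` if `v ∈ S`; the variables
outside `S` are left alone. -/
noncomputable def variableRemainder (v : V) : Polynomial R →ₗ[R] Polynomial R :=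
  if v ∈ S then Polynomial.modByMonicHom (G v) else LinearMap.id

variable {S G} in
theorem coeff_variableRemainder_X_pow_of_lt {v : V} {i n : ℕ} (h : n < i) :
    (variableRemainder S G v (Polynomial.X ^ n)).coeff i = 0 := by
  refine Polynomial.coeff_eq_zero_of_natDegree_lt (lt_of_le_of_lt ?_ h)
  rw [variableRemainder]
  split_ifs
  · exact Polynomial.natDegree_modByMonic_le_left.trans (Polynomial.natDegree_X_pow_le n)
  · exact Polynomial.natDegree_X_pow_le n

variable [Fintype V]

/-- The normal form modulo the ideal generated by the polynomials `G v` in the single variables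
`v ∈ S`. -/
noncomputable def remainder : MvPolynomial V R →ₗ[R] MvPolynomial V R :=
  (basisMonomials V R).constr R fun m =>
    ∏ v, (variableRemainder S G v (Polynomial.X ^ m v)).toMvPolynomial v

theorem remainder_monomial (m : V →₀ ℕ) : remainder S G (monomial m 1) =
    ∏ v, (variableRemainder S G v (Polynomial.X ^ m v)).toMvPolynomial v := by
  have h := (basisMonomials V R).constr_basis R (fun m =>
    ∏ v, (variableRemainder S G v (Polynomial.X ^ m v)).toMvPolynomial v) m
  rwa [coe_basisMonomials] at h

theorem remainder_toMvPolynomial_mul_monomial (w : V) (q : Polynomial R) (m : V →₀ ℕ) :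
    remainder S G (q.toMvPolynomial w * monomial m 1) =
      (variableRemainder S G w (q * Polynomial.X ^ m w)).toMvPolynomial w *
        ∏ v ∈ Finset.univ.erase w,
          (variableRemainder S G v (Polynomial.X ^ m v)).toMvPolynomial v := by
  induction q using Polynomial.induction_on' with
  | add p q hp hq => simp only [map_add, add_mul, hp, hq]
  | monomial n a =>
    rw [← Polynomial.smul_X_eq_monomial]
    simp only [map_smul, smul_mul_assoc, map_pow, Polynomial.toMvPolynomial_X, ← pow_add]
    rw [X_pow_eq_monomial, monomial_mul, one_mul, remainder_monomial,
      ← Finset.mul_prod_erase _ _ (Finset.mem_univ w)]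
    congr 2
    · simp
    · refine Finset.prod_congr rfl fun v hv => ?_
      rw [Finsupp.add_apply, Finsupp.single_eq_of_ne (Finset.ne_of_mem_erase hv), zero_add]

variable {S G}

theorem remainder_toMvPolynomial_mul {w : V} (hw : w ∉ S) (q : Polynomial R)
    (f : MvPolynomial V R) :
    remainder S G (q.toMvPolynomial w * f) = q.toMvPolynomial w * remainder S G f := by
  suffices h : remainder S G ∘ₗ LinearMap.mulLeft R (q.toMvPolynomial w) =
      LinearMap.mulLeft R (q.toMvPolynomial w) ∘ₗ remainder S G from congr($h f)
  refine (basisMonomials V R).ext fun m => ?_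
  have hT : variableRemainder S G w = LinearMap.id := if_neg hw
  simp only [coe_basisMonomials, LinearMap.comp_apply, LinearMap.mulLeft_apply,
    remainder_toMvPolynomial_mul_monomial, remainder_monomial, hT, LinearMap.id_apply, map_mul,
    mul_assoc]
  rw [← Finset.mul_prod_erase _ _ (Finset.mem_univ w), hT, LinearMap.id_apply]

theorem remainder_eq_zero_of_mem (hG : ∀ v ∈ S, (G v).Monic) {f : MvPolynomial V R}
    (hf : f ∈ Ideal.span ((fun v => (G v).toMvPolynomial v) '' S)) : remainder S G f = 0 := by
  have hgen (w : V) (hw : w ∈ S) (f : MvPolynomial V R) :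
      remainder S G ((G w).toMvPolynomial w * f) = 0 := by
    suffices h : remainder S G ∘ₗ LinearMap.mulLeft R ((G w).toMvPolynomial w) = 0 from congr($h f)
    refine (basisMonomials V R).ext fun m => ?_
    have hT : variableRemainder S G w (G w * Polynomial.X ^ m w) = 0 := by
      rw [variableRemainder, if_pos hw, Polynomial.modByMonicHom_apply,
        Polynomial.modByMonic_eq_zero_iff_dvd (hG w hw)]
      exact dvd_mul_right _ _
    rw [LinearMap.comp_apply, LinearMap.mulLeft_apply, coe_basisMonomials,
      remainder_toMvPolynomial_mul_monomial, hT, map_zero, zero_mul, LinearMap.zero_apply]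
  obtain ⟨n, a, g, rfl⟩ := Submodule.mem_span_set'.mp hf
  rw [map_sum]
  refine Finset.sum_eq_zero fun i _ => ?_
  obtain ⟨w, hw, hwg⟩ := (g i).2
  rw [smul_eq_mul, mul_comm, ← hwg, hgen w hw]

theorem sub_remainder_mem (f : MvPolynomial V R) :
    f - remainder S G f ∈ Ideal.span ((fun v => (G v).toMvPolynomial v) '' S) := by
  set I := Ideal.span ((fun v => (G v).toMvPolynomial v) '' S)
  suffices h : (Ideal.Quotient.mkₐ R I).toLinearMap ∘ₗ remainder S G =
      (Ideal.Quotient.mkₐ R I).toLinearMap from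
    Ideal.Quotient.eq.mp congr($h f).symm
  refine (basisMonomials V R).ext fun m => ?_
  rw [LinearMap.comp_apply, coe_basisMonomials, remainder_monomial, AlgHom.toLinearMap_apply,
    AlgHom.toLinearMap_apply, map_prod]
  beta_reduce
  rw [monomial_eq, C_1, one_mul,
    Finsupp.prod_fintype _ _ fun _ => pow_zero _, map_prod]
  refine Finset.prod_congr rfl fun v _ => Ideal.Quotient.eq.mpr ?_
  rw [variableRemainder]
  split_ifs with hv
  · rw [Polynomial.modByMonicHom_apply, Polynomial.modByMonic_eq_sub_mul_div, map_sub, map_mul,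
      map_pow, Polynomial.toMvPolynomial_X, sub_sub_cancel_left]
    exact I.neg_mem (I.mul_mem_right _ (Ideal.subset_span ⟨v, hv, rfl⟩))
  · simp

theorem coeff_remainder_monomial [Nontrivial R] (hG : ∀ v ∈ S, (G v).Monic) {m m' : V →₀ ℕ}
    (h : m'.degree ≤ m.degree) : coeff m (remainder S G (monomial m' 1)) =
      if ∃ v ∈ S, (G v).natDegree ≤ m v then 0 else coeff m (monomial m' (1 : R)) := by
  rw [remainder_monomial, coeff_prod_toMvPolynomial]
  split_ifs with hred
  · obtain ⟨v, hv, hvm⟩ := hred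
    refine Finset.prod_eq_zero (Finset.mem_univ v) (Polynomial.coeff_eq_zero_of_degree_lt ?_)
    rw [variableRemainder, if_pos hv]
    exact (Polynomial.degree_modByMonic_lt _ (hG v hv)).trans_le
      (Polynomial.degree_le_natDegree.trans (by exact_mod_cast hvm))
  rcases eq_or_ne m' m with rfl | hne
  · rw [coeff_monomial, if_pos rfl]
    refine Finset.prod_eq_one fun v _ => ?_
    rw [variableRemainder]
    split_ifs with hv
    · have hlt : m' v < (G v).natDegree := not_le.mp fun hle => hred ⟨v, hv, hle⟩
      rw [Polynomial.modByMonicHom_apply, (Polynomial.modByMonic_eq_self_iff (hG v hv)).mpr,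
        Polynomial.coeff_X_pow_self]
      rwa [Polynomial.degree_X_pow, Polynomial.degree_eq_natDegree (hG v hv).ne_zero,
        Nat.cast_lt]
    · rw [LinearMap.id_apply, Polynomial.coeff_X_pow_self]
  · obtain ⟨v, hv⟩ : ∃ v, m' v < m v := by
      by_contra! hle
      obtain ⟨d, rfl⟩ := exists_add_of_le (show m ≤ m' from hle)
      have hd : d = 0 := by
        rw [← Finsupp.degree_eq_zero_iff]
        simpa using h
      exact hne (by rw [hd, add_zero])
    rw [coeff_monomial, if_neg hne, Finset.prod_eq_zero (Finset.mem_univ v)]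
    exact coeff_variableRemainder_X_pow_of_lt hv

/-- In top degree, taking the remainder deletes the monomials divisible by a leading monomial. -/
theorem coeff_remainder [Nontrivial R] (hG : ∀ v ∈ S, (G v).Monic) {f : MvPolynomial V R}
    {m : V →₀ ℕ} (hf : ∀ m' ∈ f.support, m'.degree ≤ m.degree) :
    coeff m (remainder S G f) =
      if ∃ v ∈ S, (G v).natDegree ≤ m v then 0 else coeff m f := by
  have hsmul (m' : V →₀ ℕ) : monomial m' (coeff m' f) = coeff m' f • monomial m' 1 := by
    rw [smul_monomial, smul_eq_mul, mul_one]
  conv_lhs => rw [f.as_sum, map_sum, coeff_sum]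
  conv_rhs => rw [f.as_sum, coeff_sum]
  rw [← Finset.sum_const_zero (s := f.support), ← Finset.sum_ite_irrel]
  refine Finset.sum_congr rfl fun m' hm' => ?_
  rw [hsmul, map_smul, coeff_smul, coeff_smul, coeff_remainder_monomial hG (hf m' hm'),
    smul_ite, smul_zero]

end Remainder

/-! ### Normal forms modulo a homogeneous ideal -/

section HomogeneousComponent

variable {V A : Type*} [CommRing A]

theorem totalDegree_le_iff_degree {f : MvPolynomial V A} {n : ℕ} :
    f.totalDegree ≤ n ↔ ∀ m ∈ f.support, m.degree ≤ n := by
  rw [totalDegree, Finset.sup_le_iff]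
  rfl

theorem homogeneousComponent_add_mul {f g : MvPolynomial V A} {a b : ℕ}
    (hf : f.totalDegree ≤ a) (hg : g.totalDegree ≤ b) :
    homogeneousComponent (a + b) (f * g) =
      homogeneousComponent a f * homogeneousComponent b g := by
  classical
  rw [totalDegree_le_iff_degree] at hf hg
  ext m
  rw [coeff_homogeneousComponent, coeff_mul, coeff_mul, ← Finset.sum_const_zero,
    ← Finset.sum_ite_irrel]
  refine Finset.sum_congr rfl fun ⟨i, j⟩ hij => ?_
  obtain rfl := Finset.HasAntidiagonal.mem_antidiagonal.mp hij
  simp only [coeff_homogeneousComponent, map_add]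
  by_cases hi : coeff i f = 0
  · simp [hi]
  by_cases hj : coeff j g = 0
  · simp [hj]
  have := hf i (mem_support_iff.mpr hi)
  have := hg j (mem_support_iff.mpr hj)
  split_ifs <;> lia

theorem homogeneousComponent_mul_pow {f : MvPolynomial V A} {a : ℕ} (hf : f.totalDegree ≤ a)
    (n : ℕ) : homogeneousComponent (n * a) (f ^ n) = homogeneousComponent a f ^ n := by
  induction n with
  | zero => simp
  | succ n ih =>
    rw [pow_succ, pow_succ, add_mul, one_mul, homogeneousComponent_add_mul _ hf, ih]
    exact (totalDegree_pow _ _).trans (Nat.mul_le_mul_left _ hf)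

theorem mem_span_image_X_pow_iff {s : Set V} {K : V → ℕ} {f : MvPolynomial V A} :
    f ∈ Ideal.span ((fun v => X v ^ K v) '' s) ↔ ∀ m ∈ f.support, ∃ v ∈ s, K v ≤ m v := by
  have h : (fun v => (X v : MvPolynomial V A) ^ K v) '' s =
      (fun m => monomial m 1) '' ((fun v => Finsupp.single v (K v)) '' s) := by
    simp only [Set.image_image, X_pow_eq_monomial]
  rw [h, mem_ideal_span_monomial_image]
  simp

end HomogeneousComponent

section IsNormalForm

variable {V A : Type*} [CommRing A] {I : Ideal (MvPolynomial V A)} {J : Finset V}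
  {ν : MvPolynomial V A →ₗ[A] MvPolynomial V A}

/-- `ν` computes normal forms modulo `I`: it is a projection with kernel `I` that is graded and
linear over the polynomials in the variables of `J`. It makes the quotient by `I` a graded direct
summand of the polynomial ring over the subring generated by the variables of `J`. -/
structure IsNormalForm (I : Ideal (MvPolynomial V A)) (J : Finset V)
    (ν : MvPolynomial V A →ₗ[A] MvPolynomial V A) : Prop where
  sub_mem : ∀ f, f - ν f ∈ I
  eq_zero_of_mem : ∀ f ∈ I, ν f = 0
  map_X_mul : ∀ v ∈ J, ∀ f, ν (X v * f) = X v * ν f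
  isHomogeneous : ∀ f D, f.IsHomogeneous D → (ν f).IsHomogeneous D

namespace IsNormalForm

theorem idem (h : IsNormalForm I J ν) (f : MvPolynomial V A) : ν (ν f) = ν f := by
  rw [eq_comm, ← sub_eq_zero, ← map_sub]
  exact h.eq_zero_of_mem _ (h.sub_mem f)

theorem map_toMvPolynomial_mul (h : IsNormalForm I J ν) {v : V} (hv : v ∈ J) (q : Polynomial A)
    (f : MvPolynomial V A) : ν (q.toMvPolynomial v * f) = q.toMvPolynomial v * ν f := by
  induction q using Polynomial.induction_on' with
  | add p q hp hq => simp only [map_add, add_mul, hp, hq]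
  | monomial n a =>
    rw [← Polynomial.smul_X_eq_monomial, map_smul, map_pow, Polynomial.toMvPolynomial_X,
      smul_mul_assoc, smul_mul_assoc, map_smul]
    congr 1
    induction n with
    | zero => simp
    | succ n ih => rw [pow_succ', mul_assoc, h.map_X_mul v hv, ih, mul_assoc]

theorem mem_sup_span_iff (h : IsNormalForm I J ν) {s : Set V} (hs : s ⊆ J)
    {G : V → Polynomial A} {f : MvPolynomial V A} :
    f ∈ I ⊔ Ideal.span ((fun v => (G v).toMvPolynomial v) '' s) ↔
      ν f ∈ Ideal.span ((fun v => (G v).toMvPolynomial v) '' s) := by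
  constructor
  · intro hf
    obtain ⟨i, hi, g, hg, rfl⟩ := Submodule.mem_sup.mp hf
    obtain ⟨n, a, b, rfl⟩ := Submodule.mem_span_set'.mp hg
    rw [map_add, h.eq_zero_of_mem i hi, zero_add, map_sum]
    refine sum_mem fun j _ => ?_
    obtain ⟨v, hv, hvb⟩ := (b j).2
    rw [smul_eq_mul, mul_comm, ← hvb, h.map_toMvPolynomial_mul (hs hv)]
    exact Ideal.mul_mem_right _ _ (Ideal.subset_span ⟨v, hv, rfl⟩)
  · intro hf
    rw [← sub_add_cancel f (ν f)]
    exact Submodule.add_mem_sup (h.sub_mem f) hf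

theorem map_homogeneousComponent (h : IsNormalForm I J ν) (D : ℕ) (f : MvPolynomial V A) :
    ν (homogeneousComponent D f) = homogeneousComponent D (ν f) := by
  conv_rhs => rw [← sum_homogeneousComponent f, map_sum, map_sum]
  have hcomp (i : ℕ) : homogeneousComponent D (ν (homogeneousComponent i f)) =
      if D = i then ν (homogeneousComponent i f) else 0 :=
    homogeneousComponent_of_mem (h.isHomogeneous _ i (homogeneousComponent_isHomogeneous i f))
  simp only [hcomp, Finset.sum_ite_eq, Finset.mem_range]
  split_ifs with hD
  · rfl
  · rw [homogeneousComponent_eq_zero _ _ (by lia), map_zero]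

theorem totalDegree_le (h : IsNormalForm I J ν) (f : MvPolynomial V A) :
    (ν f).totalDegree ≤ f.totalDegree := by
  rw [totalDegree_le_iff_degree]
  intro m hm
  by_contra! hlt
  refine mem_support_iff.mp hm ?_
  rw [← if_pos (c := m.degree = m.degree) (t := coeff m (ν f)) (e := 0) rfl,
    ← coeff_homogeneousComponent, ← h.map_homogeneousComponent,
    homogeneousComponent_eq_zero _ _ hlt, map_zero, coeff_zero]

variable [Finite V]

theorem homogeneousComponent_mem_sup_span [Nontrivial A] (h : IsNormalForm I J ν)
    {G : V → Polynomial A} (hG : ∀ v ∈ J, (G v).Monic) {f : MvPolynomial V A} {D : ℕ}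
    (hf : f ∈ I ⊔ Ideal.span ((fun v => (G v).toMvPolynomial v) '' J)) (hD : f.totalDegree ≤ D) :
    homogeneousComponent D f ∈ I ⊔ Ideal.span ((fun v => X v ^ (G v).natDegree) '' J) := by
  classical
  cases nonempty_fintype V
  have hf' := remainder_eq_zero_of_mem hG ((h.mem_sup_span_iff subset_rfl).mp hf)
  rw [← sub_add_cancel (homogeneousComponent D f) (ν (homogeneousComponent D f))]
  refine Submodule.add_mem_sup (h.sub_mem _) (mem_span_image_X_pow_iff.mpr fun m hm => ?_)
  rw [h.map_homogeneousComponent, mem_support_iff, coeff_homogeneousComponent] at hm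
  obtain ⟨rfl, hmν⟩ := ite_ne_right_iff.mp hm
  by_contra hred
  simp only [SetLike.mem_coe] at hred
  refine hmν ?_
  have hcoeff := coeff_remainder (m := m) hG
    (totalDegree_le_iff_degree.mp ((h.totalDegree_le f).trans hD))
  rwa [hf', coeff_zero, if_neg hred, eq_comm] at hcoeff

theorem exists_sub_mem_sup_span [Nontrivial A] (h : IsNormalForm I J ν)
    {G : V → Polynomial A} (hG : ∀ v ∈ J, (G v).Monic) {f : MvPolynomial V A} {D : ℕ}
    (hf : homogeneousComponent D f ∈ I ⊔ Ideal.span ((fun v => X v ^ (G v).natDegree) '' J))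
    (hD : f.totalDegree ≤ D) :
    ∃ g, f - g ∈ I ⊔ Ideal.span ((fun v => (G v).toMvPolynomial v) '' J) ∧
      ∀ m ∈ g.support, m.degree < D := by
  classical
  cases nonempty_fintype V
  set y := ν (homogeneousComponent D f)
  have hy : y.IsHomogeneous D :=
    h.isHomogeneous _ D (homogeneousComponent_isHomogeneous D f)
  have hyX : y ∈ Ideal.span ((fun v => X v ^ (G v).natDegree) '' J) := by
    have := (h.mem_sup_span_iff (G := fun v => Polynomial.X ^ (G v).natDegree) subset_rfl
      (f := homogeneousComponent D f)).mp (by simpa using hf)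
    simpa using this
  refine ⟨f - homogeneousComponent D f + remainder J G y, ?_, fun m hm => ?_⟩
  · have : f - (f - homogeneousComponent D f + remainder J G y) =
        (homogeneousComponent D f - y) + (y - remainder J G y) := by ring
    rw [this]
    exact Submodule.add_mem_sup (h.sub_mem _) (sub_remainder_mem y)
  · by_contra! hle
    refine mem_support_iff.mp hm ?_
    have hydeg : ∀ m' ∈ y.support, m'.degree ≤ m.degree := fun m' hm' =>
      (totalDegree_le_iff_degree.mp hy.totalDegree_le m' hm').trans hle
    rw [coeff_add, coeff_sub, coeff_homogeneousComponent, coeff_remainder hG hydeg]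
    have hy0 : (if ∃ v ∈ J, (G v).natDegree ≤ m v then 0 else coeff m y) = 0 := by
      rw [ite_eq_left_iff]
      exact fun hred => by_contra fun hmy =>
        hred (mem_span_image_X_pow_iff.mp hyX m (mem_support_iff.mpr hmy))
    rw [hy0, add_zero]
    split_ifs with hmD
    · exact sub_self _
    · rw [sub_zero]
      by_contra hmf
      exact hmD (le_antisymm (totalDegree_le_iff_degree.mp hD m (mem_support_iff.mpr hmf)) hle)

theorem isSMulRegular_toMvPolynomial [IsDomain A] (h : IsNormalForm I J ν)
    {S : Finset V} (hS : S ⊆ J) {G : V → Polynomial A} (hG : ∀ v ∈ S, (G v).Monic) {w : V}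
    (hwJ : w ∈ J) (hwS : w ∉ S) {Q : Polynomial A} (hQ : Q ≠ 0) :
    IsSMulRegular (MvPolynomial V A ⧸ I ⊔ Ideal.span ((fun v => (G v).toMvPolynomial v) '' S))
      (Q.toMvPolynomial w) := by
  classical
  cases nonempty_fintype V
  rw [isSMulRegular_quotient_iff_mem_of_smul_mem]
  intro z hz
  rw [smul_eq_mul, h.mem_sup_span_iff hS, h.map_toMvPolynomial_mul hwJ] at hz
  have hrem := remainder_eq_zero_of_mem hG hz
  rw [remainder_toMvPolynomial_mul hwS, mul_eq_zero,
    map_eq_zero_iff _ (Polynomial.toMvPolynomial_injective w), or_iff_right hQ] at hrem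
  have hz' := sub_remainder_mem (S := S) (G := G) (ν z)
  rw [hrem, sub_zero] at hz'
  exact (h.mem_sup_span_iff hS).mpr hz'

end IsNormalForm

end IsNormalForm

section FRational

theorem mk_mem_span_image_mk_iff {P ι : Type*} [CommRing P] {I : Ideal P} {y : ι → P} {s : Set ι}
    {f : P} : Ideal.Quotient.mk I f ∈ Ideal.span ((fun v => Ideal.Quotient.mk I (y v)) '' s) ↔
      f ∈ I ⊔ Ideal.span (y '' s) := by
  rw [← Set.image_image, ← Ideal.map_span, Ideal.mem_quotient_iff_mem_sup, sup_comm]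

theorem isSMulRegular_quotient_span_image_mk_iff {P ι : Type*} [CommRing P] {I : Ideal P}
    {y : ι → P} {s : Set ι} {a : P} :
    IsSMulRegular ((P ⧸ I) ⧸ Ideal.span ((fun v => Ideal.Quotient.mk I (y v)) '' s))
        (Ideal.Quotient.mk I a) ↔
      IsSMulRegular (P ⧸ I ⊔ Ideal.span (y '' s)) a := by
  simp only [isSMulRegular_quotient_iff_mem_of_smul_mem, smul_eq_mul,
    Ideal.Quotient.mk_surjective.forall, ← map_mul, mk_mem_span_image_mk_iff]

namespace IsNormalForm

variable {V A : Type*} [Finite V] [CommRing A] {I : Ideal (MvPolynomial V A)} {J : Finset V}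
  {ν : MvPolynomial V A →ₗ[A] MvPolynomial V A}

theorem leadingForm_mul_pow_mem [Nontrivial A] (h : IsNormalForm I J ν) {G : V → Polynomial A}
    (hG : ∀ v ∈ J, (G v).Monic) {c x : MvPolynomial V A} {D q : ℕ} (hx : x.totalDegree ≤ D)
    (hcx : c * x ^ q ∈ I ⊔ Ideal.span ((fun v => (G v ^ q).toMvPolynomial v) '' J)) :
    homogeneousComponent c.totalDegree c * homogeneousComponent D x ^ q ∈
      I ⊔ Ideal.span ((fun v => X v ^ ((G v).natDegree * q)) '' J) := by
  have hxq : (x ^ q).totalDegree ≤ q * D :=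
    (totalDegree_pow _ _).trans (Nat.mul_le_mul_left _ hx)
  have hJ : (fun v => (X v : MvPolynomial V A) ^ ((G v).natDegree * q)) '' J =
      (fun v => X v ^ (G v ^ q).natDegree) '' J :=
    Set.image_congr fun v hv => by rw [(hG v hv).natDegree_pow, mul_comm]
  rw [hJ, ← homogeneousComponent_mul_pow hx, ← homogeneousComponent_add_mul le_rfl hxq]
  exact h.homogeneousComponent_mem_sup_span (fun v hv => (hG v hv).pow q) hcx
    ((totalDegree_mul _ _).trans (add_le_add le_rfl hxq))

omit [Finite V] in
theorem exists_mk_eq_leadingForm_notMem (h : IsNormalForm I J ν) {c₀ : MvPolynomial V A}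
    (hc₀ : c₀ ∉ I) :
    ∃ c, Ideal.Quotient.mk I c₀ = Ideal.Quotient.mk I c ∧
      homogeneousComponent c.totalDegree c ∉ I := by
  refine ⟨ν c₀, Ideal.Quotient.eq.mpr (h.sub_mem c₀), fun hlead => hc₀ ?_⟩
  have hzero := h.eq_zero_of_mem _ hlead
  rw [h.map_homogeneousComponent, h.idem] at hzero
  have hν : ν c₀ = 0 := by
    by_contra hne
    obtain ⟨m, hm, hmdeg⟩ := (ν c₀).support.exists_mem_eq_sup (support_nonempty.mpr hne)
      Finsupp.degree
    refine mem_support_iff.mp hm ?_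
    rw [← if_pos (c := m.degree = (ν c₀).totalDegree) (t := coeff m (ν c₀)) (e := 0) hmdeg.symm,
      ← coeff_homogeneousComponent, hzero, coeff_zero]
  simpa only [hν, sub_zero] using h.sub_mem c₀

theorem homogeneousComponent_mem_of_frequently [Nontrivial A] (h : IsNormalForm I J ν) {p : ℕ}
    [ExpChar (MvPolynomial V A ⧸ I) p] {G : V → Polynomial A} (hG : ∀ v ∈ J, (G v).Monic)
    (hX : IsTightlyClosed p (Ideal.span
      ((fun v => Ideal.Quotient.mk I (X v) ^ (G v).natDegree) '' J)))
    {c x : MvPolynomial V A} {D : ℕ} (hc : homogeneousComponent c.totalDegree c ∉ I)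
    (hD : x.totalDegree ≤ D)
    (hx : ∃ᶠ e in Filter.atTop, Ideal.Quotient.mk I c * Ideal.Quotient.mk I x ^ p ^ e ∈
      frobeniusPower (p ^ e)
        (Ideal.span ((fun v => Ideal.Quotient.mk I ((G v).toMvPolynomial v)) '' J))) :
    homogeneousComponent D x ∈
      I ⊔ Ideal.span ((fun v => X v ^ (G v).natDegree) '' J) := by
  simp only [← mk_mem_span_image_mk_iff, map_pow]
  refine hX _ _ (Ideal.Quotient.eq_zero_iff_mem.not.mpr hc) (hx.mono fun e he => ?_)
  simp only [frobeniusPower_span, Set.image_image, ← map_pow, ← map_mul,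
    mk_mem_span_image_mk_iff] at he
  rw [frobeniusPower_span_image_pow]
  simpa only [← map_pow, ← map_mul, mk_mem_span_image_mk_iff] using
    h.leadingForm_mul_pow_mem hG hD he

/-- Tight closedness passes from the ideal of leading forms to the ideal itself: the leading form
of `x` lies in the former, so `x` can be replaced by an element of lower degree. -/
theorem isTightlyClosed_span_of_leadingForm [Nontrivial A] (h : IsNormalForm I J ν) {p : ℕ}
    [ExpChar (MvPolynomial V A ⧸ I) p] {G : V → Polynomial A} (hG : ∀ v ∈ J, (G v).Monic)
    (hX : IsTightlyClosed p (Ideal.span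
      ((fun v => Ideal.Quotient.mk I (X v) ^ (G v).natDegree) '' J))) :
    IsTightlyClosed p
      (Ideal.span ((fun v => Ideal.Quotient.mk I ((G v).toMvPolynomial v)) '' J)) := by
  set 𝔤 := Ideal.span ((fun v => Ideal.Quotient.mk I ((G v).toMvPolynomial v)) '' J) with h𝔤
  simp only [IsTightlyClosed, Ideal.Quotient.mk_surjective.forall]
  intro c₀ x hc₀ hx
  obtain ⟨c, hc₀c, hc⟩ :=
    h.exists_mk_eq_leadingForm_notMem (Ideal.Quotient.eq_zero_iff_mem.not.mp hc₀)
  rw [hc₀c] at hx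
  have hxdeg : ∀ m ∈ x.support, m.degree < x.totalDegree + 1 := fun m hm =>
    Nat.lt_succ_iff.mpr (totalDegree_le_iff_degree.mp le_rfl m hm)
  generalize x.totalDegree + 1 = D at hxdeg
  induction D generalizing x with
  | zero =>
    rw [support_eq_empty.mp (Finset.eq_empty_of_forall_notMem fun m hm =>
      Nat.not_lt_zero _ (hxdeg m hm)), map_zero]
    exact zero_mem 𝔤
  | succ D ih =>
    have hxD : x.totalDegree ≤ D :=
      totalDegree_le_iff_degree.mpr fun m hm => Nat.lt_succ_iff.mp (hxdeg m hm)
    obtain ⟨y, hxy, hyD⟩ := h.exists_sub_mem_sup_span hG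
      (h.homogeneousComponent_mem_of_frequently hG hX hc hxD hx) hxD
    rw [← mk_mem_span_image_mk_iff, ← h𝔤, map_sub] at hxy
    refine (Submodule.sub_mem_iff_left 𝔤 (ih y (hx.mono fun e he => ?_) hyD)).mp hxy
    have hcxy := Ideal.mul_mem_left _ (Ideal.Quotient.mk I c) (pow_mem_frobeniusPower hxy (p ^ e))
    rw [sub_pow_expChar_pow, mul_sub] at hcxy
    exact (Submodule.sub_mem_iff_right _ he).mp hcxy

end IsNormalForm
end FRational

theorem IsTightlyClosed.map_mk_of_ker_eq {P S : Type*} [CommRing P] [CommRing S] {φ : P →+* S}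
    {I : Ideal P} (hI : RingHom.ker φ = I) {p : ℕ} [ExpChar (P ⧸ I) p] [ExpChar S p] {𝔞 : Ideal P}
    (h𝔞 : IsTightlyClosed p (𝔞.map φ)) (hcomap : (𝔞.map φ).comap φ ≤ I ⊔ 𝔞) :
    IsTightlyClosed p (𝔞.map (Ideal.Quotient.mk I)) := by
  subst hI
  have hmap : (𝔞.map (Ideal.Quotient.mk (RingHom.ker φ))).map φ.kerLift = 𝔞.map φ := by
    rw [Ideal.map_map]
    rfl
  refine IsTightlyClosed.of_map φ.kerLift_injective (hmap ▸ h𝔞) ?_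
  rw [hmap, SetLike.le_def, Ideal.Quotient.mk_surjective.forall]
  intro x hx
  rw [Ideal.mem_quotient_iff_mem_sup, sup_comm]
  exact hcomap hx

namespace IsNormalForm

theorem isTightlyClosed_span {V A : Type*} [Finite V] [CommRing A] [IsDomain A]
    {I : Ideal (MvPolynomial V A)} {J : Finset V} {ν : MvPolynomial V A →ₗ[A] MvPolynomial V A}
    (h : IsNormalForm I J ν) {p : ℕ} [ExpChar (MvPolynomial V A ⧸ I) p]
    (hJ : IsTightlyClosed p (Ideal.span ((fun v => Ideal.Quotient.mk I (X v)) '' J)))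
    {G : V → Polynomial A} (hG : ∀ v ∈ J, (G v).Monic) :
    IsTightlyClosed p
      (Ideal.span ((fun v => Ideal.Quotient.mk I ((G v).toMvPolynomial v)) '' J)) := by
  classical
  refine h.isTightlyClosed_span_of_leadingForm hG (hJ.span_image_pow (fun K w hw => ?_) _)
  have hpow : (fun v => Ideal.Quotient.mk I (X v) ^ K v) =
      fun v => Ideal.Quotient.mk I ((Polynomial.X ^ K v).toMvPolynomial v) := by
    simp only [map_pow, Polynomial.toMvPolynomial_X]
  rw [hpow, isSMulRegular_quotient_span_image_mk_iff, ← Polynomial.toMvPolynomial_X]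
  exact h.isSMulRegular_toMvPolynomial (J.erase_subset w) (fun v _ => Polynomial.monic_X_pow _) hw
    (J.notMem_erase w) Polynomial.X_ne_zero

theorem isTightlyClosed_of_isArtinianRing {V F : Type*} [Finite V] [Nonempty V] [Field F]
    {I : Ideal (MvPolynomial V F)} {J : Finset V} {ν : MvPolynomial V F →ₗ[F] MvPolynomial V F}
    (h : IsNormalForm I J ν) {p : ℕ} [ExpChar (MvPolynomial V F ⧸ I) p]
    (hJ : IsTightlyClosed p (Ideal.span ((fun v => Ideal.Quotient.mk I (X v)) '' J)))
    {d : ℕ} (hd : J.card = d) (f : Fin d → MvPolynomial V F ⧸ I)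
    (hf : IsArtinianRing ((MvPolynomial V F ⧸ I) ⧸ Ideal.span (Set.range f))) :
    IsTightlyClosed p (Ideal.span (Set.range f)) := by
  subst hd
  have := (Module.finite_iff_isArtinianRing F
    ((MvPolynomial V F ⧸ I) ⧸ Ideal.span (Set.range f))).mpr hf
  let x : V → (MvPolynomial V F ⧸ I) ⧸ Ideal.span (Set.range f) := fun v =>
    Ideal.Quotient.mk _ (Ideal.Quotient.mk I (X v))
  have hG (v : V) : (minpoly F (x v)).Monic := minpoly.monic (Algebra.IsIntegral.isIntegral _)
  let g : V → MvPolynomial V F ⧸ I := fun v =>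
    Ideal.Quotient.mk I ((minpoly F (x v)).toMvPolynomial v)
  have hgf (v : V) : g v ∈ Ideal.span (Set.range f) := by
    rw [← Ideal.Quotient.eq_zero_iff_mem]
    have hx : x v = (Ideal.Quotient.mkₐ F (Ideal.span (Set.range f))).comp
      (Ideal.Quotient.mkₐ F I) (X v) := rfl
    have hzero := minpoly.aeval F (x v)
    rwa [hx, Polynomial.aeval_algHom_apply] at hzero
  obtain ⟨E, hE⟩ := (Set.finite_Iio J.card).exists_bijOn_of_encard_eq (t := (J : Set V))
    (by rw [Set.encard_coe_eq_coe_finsetCard, ← Finset.coe_Iio, Set.encard_coe_eq_coe_finsetCard,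
      Nat.card_Iio])
  have hlink := colon_colon_le_of_isSMulRegular (⊥ : Ideal (MvPolynomial V F ⧸ I)) f
    (fun i => g (E i)) (fun i hi => ?_) (fun i _ => by rw [bot_sup_eq]; exact hgf _)
  · rw [bot_sup_eq, bot_sup_eq, ← Set.image_image g, hE.image_eq] at hlink
    exact (h.isTightlyClosed_span hJ fun v _ => hG v).of_colon_colon_le hlink
  · classical
    have himage : E '' Set.Iio i = ((Finset.Iio i).image E : Finset V) := by simp
    rw [bot_sup_eq, ← Set.image_image g, isSMulRegular_quotient_span_image_mk_iff, himage]
    refine h.isSMulRegular_toMvPolynomial ?_ (fun v _ => hG v) (hE.mapsTo hi) ?_ (hG _).ne_zero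
    · rw [← Finset.coe_subset, ← himage, ← hE.image_eq]
      exact Set.image_mono (Set.Iio_subset_Iio hi.le)
    · rw [← Finset.mem_coe, ← himage]
      rintro ⟨j, hj, hji⟩
      exact (Set.mem_Iio.mp hj).ne (hE.injOn (hj.trans hi) hi hji)

end IsNormalForm

section ExistsNormalForm

variable {V A : Type*} [CommRing A] {I : Ideal (MvPolynomial V A)} {J : Finset V}

theorem mem_of_forall_monomial_mem {S : Submodule A (MvPolynomial V A)} {f : MvPolynomial V A}
    (h : ∀ m ∈ f.support, monomial m 1 ∈ S) : f ∈ S := by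
  have hf : f ∈ restrictSupport A (f.support : Set (V →₀ ℕ)) :=
    (mem_restrictSupport_iff A).mpr subset_rfl
  rw [restrictSupport_eq_span] at hf
  exact Submodule.span_le.mpr (Set.image_subset_iff.mpr h) hf

theorem codisjoint_restrictSupport {T : Set (V →₀ ℕ)}
    (hspan : ∀ m : V →₀ ℕ, monomial m 1 ∈ I.restrictScalars A ⊔
      (restrictSupport A T ⊓ homogeneousSubmodule V A m.degree)) :
    Codisjoint (restrictSupport A T) (I.restrictScalars A) := by
  refine codisjoint_iff_le_sup.mpr fun f _ => mem_of_forall_monomial_mem fun m _ => ?_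
  rw [sup_comm]
  exact sup_le_sup_left inf_le_left (I.restrictScalars A) (hspan m)

theorem exists_isNormalForm {T : Set (V →₀ ℕ)}
    (hT : ∀ v ∈ J, ∀ m ∈ T, Finsupp.single v 1 + m ∈ T)
    (hspan : ∀ m : V →₀ ℕ, monomial m 1 ∈ I.restrictScalars A ⊔
      (restrictSupport A T ⊓ homogeneousSubmodule V A m.degree))
    (hdisj : Disjoint (restrictSupport A T) (I.restrictScalars A)) :
    ∃ ν, IsNormalForm I J ν := by
  have hcompl : IsCompl _ _ := ⟨hdisj, codisjoint_restrictSupport hspan⟩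
  set ν := (restrictSupport A T).projection (I.restrictScalars A) hcompl
  have hsub : ∀ f, f - ν f ∈ I := Submodule.sub_projection_mem hcompl
  have hmem : ∀ f, ν f ∈ restrictSupport A T := Submodule.projection_apply_mem hcompl
  refine ⟨ν, hsub, fun f hf => (Submodule.projection_apply_eq_zero_iff hcompl).mpr hf,
    fun v hv f => ?_, fun f D hf => ?_⟩
  · have hXν : X v * ν f ∈ restrictSupport A T := by
      have hXT : restrictSupport A T ≤
          (restrictSupport A T).comap (LinearMap.mulLeft A (X v)) := by
        conv_lhs => rw [restrictSupport_eq_span]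
        rw [Submodule.span_le]
        rintro _ ⟨m, hm, rfl⟩
        simp [X, monomial_mul, hT v hv m hm]
      exact hXT (hmem f)
    rw [← (Submodule.projection_eq_self_iff hcompl _).mpr hXν, ← sub_eq_zero, ← map_sub, ← mul_sub]
    exact (Submodule.projection_apply_eq_zero_iff hcompl).mpr (I.mul_mem_left _ (hsub f))
  · refine mem_of_forall_monomial_mem (S := (homogeneousSubmodule V A D).comap ν) (f := f)
      fun m hm => ?_
    obtain ⟨i, hi, g, ⟨hgT, hg⟩, hig⟩ := Submodule.mem_sup.mp (hspan m)
    rw [Submodule.mem_comap, ← hig, map_add, (Submodule.projection_apply_eq_zero_iff hcompl).mpr hi,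
      zero_add, (Submodule.projection_eq_self_iff hcompl _).mpr hgT]
    have hmD : m.degree = D := by
      rw [Finsupp.degree_eq_weight_one]
      exact hf (mem_support_iff.mp hm)
    rwa [hmD] at hg

end ExistsNormalForm

/-! ### Straightening -/

theorem exists_monotone_sum_single_eq {α : Type*} [LinearOrder α] {m : α →₀ ℕ} {d : ℕ}
    (hm : m.degree = d) :
    ∃ c : Fin d → α, Monotone c ∧ ∑ r, Finsupp.single (c r) 1 = m := by
  classical
  have hlen : (m.toMultiset.sort (· ≤ ·)).length = d := by
    rw [Multiset.length_sort, Finsupp.card_toMultiset, ← hm, Finsupp.degree_apply]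
    rfl
  subst hlen
  refine ⟨(m.toMultiset.sort (· ≤ ·)).get,
    (Multiset.pairwise_sort m.toMultiset (· ≤ ·)).sortedLE.monotone_get, ?_⟩
  rw [← Finsupp.orderIsoMultiset.injective.eq_iff]
  simp only [Finsupp.coe_orderIsoMultiset, map_sum, Finsupp.toMultiset_single, one_smul]
  calc ∑ r, {(m.toMultiset.sort (· ≤ ·)).get r}
      = (Multiset.map (fun a => {a}) (Multiset.map (m.toMultiset.sort (· ≤ ·)).get
          Finset.univ.val)).sum := by rw [Multiset.map_map]; rfl
    _ = m.toMultiset := by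
      rw [Fin.univ_val_map, List.ofFn_get, Multiset.sort_eq, Multiset.sum_map_singleton]

theorem exists_monotone_sum_single_le {α : Type*} [LinearOrder α] {s : Finset α} {m : α →₀ ℕ}
    {d : ℕ} (hd : d ≤ ∑ v ∈ s, m v) :
    ∃ c : Fin d → α, Monotone c ∧ (∀ r, c r ∈ s) ∧ ∑ r, Finsupp.single (c r) 1 ≤ m := by
  classical
  have hdeg : (m.filter (· ∈ s)).degree = ∑ v ∈ s, m v := by
    rw [Finsupp.degree_apply, Finset.sum_subset (s₂ := s) (fun v hv => (Finset.mem_filter.mp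
      (Finsupp.support_filter (· ∈ s) m ▸ hv)).2) (fun v _ => Finsupp.notMem_support_iff.mp)]
    exact Finset.sum_congr rfl fun v hv => Finsupp.filter_apply_pos _ _ hv
  obtain ⟨m', hm', hm'd⟩ := Finsupp.exists_le_degree_eq _ _ (hd.trans_eq hdeg.symm)
  obtain ⟨c, hc, rfl⟩ := exists_monotone_sum_single_eq hm'd
  refine ⟨c, hc, fun r => ?_, hm'.trans fun v => ?_⟩
  · by_contra hr
    have hle := (Finset.single_le_sum (f := fun r => Finsupp.single (c r) 1)
      (fun _ _ => zero_le) (Finset.mem_univ r)).trans hm' (c r)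
    simp [Finsupp.filter_apply_neg _ _ hr] at hle
  · by_cases hv : v ∈ s
    · rw [Finsupp.filter_apply_pos _ _ hv]
    · simp [Finsupp.filter_apply_neg _ _ hv]

theorem sum_sq_sub_lt_sum_sq_sub_comp_perm {ι A : Type*} [LinearOrder ι] [Fintype ι]
    [CommRing A] [LinearOrder A] [IsStrictOrderedRing A] {y z : ι → A} (hy : StrictMono y)
    (hz : StrictMono z) {π : Equiv.Perm ι} (hπ : π ≠ 1) :
    ∑ i, (y i - z i) ^ 2 < ∑ i, (y i - z (π i)) ^ 2 := by
  have hmul : ∑ i, y i * z (π i) < ∑ i, y i * z i := by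
    refine (hy.monotone.monovary hz.monotone).sum_mul_comp_perm_lt_sum_mul_iff.mpr fun hmono => ?_
    have hπmono : Monotone π := fun i j hij => by
      by_contra! hlt
      have hji : j ≤ i := hy.le_iff_le.mp (hmono (hz hlt))
      exact hlt.ne (congrArg π (hji.antisymm hij))
    have hπiso := hπmono.strictMono_of_injective π.injective
    exact hπ (Equiv.ext fun i => congrArg (fun e : ι ≃o ι => e i)
      (Subsingleton.elim (hπiso.orderIsoOfSurjective π π.surjective) (OrderIso.refl ι)))
  have hsq : ∑ i, z (π i) ^ 2 = ∑ i, z i ^ 2 := Equiv.sum_comp π fun i => z i ^ 2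
  have hexp (z' : ι → A) : ∑ i, (y i - z' i) ^ 2 =
      ∑ i, y i ^ 2 - 2 * ∑ i, y i * z' i + ∑ i, z' i ^ 2 := by
    rw [Finset.mul_sum, ← Finset.sum_sub_distrib, ← Finset.sum_add_distrib]
    exact Finset.sum_congr rfl fun i _ => by ring
  rw [hexp, hexp fun i => z (π i), hsq]
  linarith

theorem prod_X_eq_monomial {V A ι : Type*} [CommSemiring A] (s : Finset ι) (l : ι → V) :
    ∏ r ∈ s, (X (l r) : MvPolynomial V A) = monomial (∑ r ∈ s, Finsupp.single (l r) 1) 1 :=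
  (monomial_sum_one s _).symm

section Hankel

variable (A : Type*) [CommRing A] (k n : ℕ)

/-- The generic `(k + 1) × n` Hankel matrix. -/
noncomputable def hankelMatrix : Matrix (Fin (k + 1)) (Fin n) (MvPolynomial (Fin (n + k)) A) :=
  .of fun a b => X ⟨a + b, by lia⟩

/-- The ideal generated by the maximal minors of the generic Hankel matrix, with columns allowed to
repeat and in any order. -/
noncomputable def hankelIdeal : Ideal (MvPolynomial (Fin (n + k)) A) :=
  Ideal.span (Set.range fun g => ((hankelMatrix A k n).submatrix id g).det)

/-- The first `k` and the last `k` indices; the variables `x_v` with `v` in this set form a system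
of parameters of the Hankel determinantal ring. -/
def endIndices : Finset (Fin (n + k)) := {v | (v : ℕ) < k ∨ n ≤ (v : ℕ)}

/-- The exponents of degree at most `k` in the variables which are not end variables: the
corresponding monomials will form a basis of the Hankel determinantal ring. -/
def standardExponents : Set (Fin (n + k) →₀ ℕ) :=
  {m | ∑ v ∈ (endIndices k n)ᶜ, m v ≤ k}

variable {A k n}

theorem mem_compl_endIndices {v : Fin (n + k)} : v ∈ (endIndices k n)ᶜ ↔ k ≤ v ∧ v < n := by
  simp [endIndices]

theorem sum_sq_lt_sum_sq_perm {c : Fin (k + 1) → Fin (n + k)} (hc : Monotone c)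
    (hck : ∀ r, k ≤ c r) {σ : Equiv.Perm (Fin (k + 1))} (hσ : σ ≠ Fin.revPerm) :
    ∑ r, (c r : ℕ) ^ 2 < ∑ r, ((σ r : ℕ) + (c r - k + r)) ^ 2 := by
  have hlt := sum_sq_sub_lt_sum_sq_sub_comp_perm (y := fun r => ((c r : ℕ) + (r : ℕ) : ℤ))
    (z := fun r : Fin (k + 1) => ((r : ℕ) : ℤ)) (π := σ.trans Fin.revPerm)
    (fun i j hij => add_lt_add_of_le_of_lt (by exact_mod_cast hc hij.le) (by exact_mod_cast hij))
    (fun i j hij => Nat.cast_lt.mpr hij)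
    (fun h => hσ (Equiv.ext fun r => by
      rw [← Fin.rev_rev (σ r)]
      exact congrArg Fin.rev (Equiv.congr_fun h r)))
  simp only [add_sub_cancel_right] at hlt
  zify
  refine hlt.trans_eq (Finset.sum_congr rfl fun r _ => congrArg (· ^ 2) ?_)
  have := (σ r).is_lt
  have := hck r
  simp only [Equiv.trans_apply, Fin.revPerm_apply, Fin.val_rev]
  lia

/-- The antidiagonal term of a minor has the smallest quadratic weight. -/
theorem monomial_mem_sup_span_of_monotone
    {c : Fin (k + 1) → Fin (n + k)} (hc : Monotone c) (hcmem : ∀ r, c r ∈ (endIndices k n)ᶜ) :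
    monomial (∑ r, Finsupp.single (c r) 1) 1 ∈ (hankelIdeal A k n).restrictScalars A ⊔
      Submodule.span A ((monomial · 1) '' {m | m.degree = k + 1 ∧
        Finsupp.weight (fun v : Fin (n + k) => (v : ℕ) ^ 2) (∑ r, Finsupp.single (c r) 1) <
          Finsupp.weight (fun v : Fin (n + k) => (v : ℕ) ^ 2) m}) := by
  simp only [mem_compl_endIndices] at hcmem
  let u (σ : Equiv.Perm (Fin (k + 1))) (r : Fin (k + 1)) : Fin (n + k) :=
    ⟨σ r + (c r - k + r), by have := hcmem r; lia⟩
  have hu : u Fin.revPerm = c := by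
    funext r
    have := hcmem r
    ext
    simp only [u, Fin.revPerm_apply, Fin.val_rev]
    lia
  have hdet : ((hankelMatrix A k n).submatrix id fun r => ⟨c r - k + r, _⟩).det ∈
      hankelIdeal A k n :=
    Ideal.subset_span ⟨fun r => ⟨c r - k + r, by have := hcmem r; lia⟩, rfl⟩
  simp only [Matrix.det_apply, hankelMatrix, Matrix.submatrix_apply, id_eq, Matrix.of_apply,
    prod_X_eq_monomial] at hdet
  change ∑ σ, Equiv.Perm.sign σ • monomial (∑ r, Finsupp.single (u σ r) 1) 1 ∈
    hankelIdeal A k n at hdet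
  set S := Submodule.span A ((monomial · (1 : A)) '' {m | m.degree = k + 1 ∧ _})
  have hsign (ε : ℤˣ) (M : Submodule A (MvPolynomial (Fin (n + k)) A)) {f} :
      ε • f ∈ M ↔ f ∈ M := by
    rcases Int.units_eq_one_or ε with rfl | rfl <;> simp
  rw [← Finset.add_sum_erase _ _ (Finset.mem_univ Fin.revPerm), hu] at hdet
  refine (hsign (Equiv.Perm.sign (Fin.revPerm : Equiv.Perm (Fin (k + 1)))) _).mp ?_
  refine (Submodule.add_mem_iff_left _ (Submodule.mem_sup_right (sum_mem fun σ hσ => ?_))).mp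
    (Submodule.mem_sup_left hdet)
  refine (hsign (Equiv.Perm.sign σ) _).mpr (Submodule.subset_span ⟨_, ⟨by simp, ?_⟩, rfl⟩)
  simpa [Finsupp.weight_single, u] using
    sum_sq_lt_sum_sq_perm hc (fun r => (hcmem r).1) (Finset.ne_of_mem_erase hσ)

theorem weight_sq_le_mul_degree {N : ℕ} (m : Fin N →₀ ℕ) :
    Finsupp.weight (fun v : Fin N => (v : ℕ) ^ 2) m ≤ N ^ 2 * m.degree := by
  rw [Finsupp.weight_apply, Finsupp.degree_apply, Finset.mul_sum]
  refine Finset.sum_le_sum fun v _ => ?_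
  dsimp only
  rw [smul_eq_mul, mul_comm]
  gcongr
  exact v.is_lt.le

theorem mul_monomial_mem {V : Type*} {I : Ideal (MvPolynomial V A)} {T : Set (V →₀ ℕ)}
    (S : Submodule A (MvPolynomial V A)) (m : V →₀ ℕ) (hI : I.restrictScalars A ≤ S)
    (hT : ∀ m' ∈ T, monomial (m' + m) 1 ∈ S) {f : MvPolynomial V A}
    (hf : f ∈ I.restrictScalars A ⊔ Submodule.span A ((monomial · 1) '' T)) :
    f * monomial m 1 ∈ S := by
  suffices I.restrictScalars A ⊔ Submodule.span A ((monomial · 1) '' T) ≤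
      S.comap (LinearMap.mulRight A (monomial m 1)) from this hf
  refine sup_le (fun g hg => hI (I.mul_mem_right _ hg)) (Submodule.span_le.mpr ?_)
  rintro _ ⟨m', hm', rfl⟩
  simpa [monomial_mul] using hT m' hm'

theorem monomial_mem_sup_standardExponents (m : Fin (n + k) →₀ ℕ) :
    monomial m 1 ∈ (hankelIdeal A k n).restrictScalars A ⊔
      (restrictSupport A (standardExponents k n) ⊓
        homogeneousSubmodule (Fin (n + k)) A m.degree) := by
  classical
  induction hN : (n + k) ^ 2 * m.degree - Finsupp.weight (fun v : Fin (n + k) => (v : ℕ) ^ 2) m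
    using Nat.strong_induction_on generalizing m with
  | _ N ih =>
    by_cases hm : m ∈ standardExponents k n
    · exact Submodule.mem_sup_right ⟨(mem_restrictSupport_iff A).mpr fun m' hm' =>
        Finset.mem_singleton.mp (support_monomial_subset hm') ▸ hm, isHomogeneous_monomial 1 rfl⟩
    obtain ⟨c, hc, hcmem, hcm⟩ := exists_monotone_sum_single_le (Nat.lt_of_not_le hm)
    obtain ⟨m₁, rfl⟩ := exists_add_of_le hcm
    rw [← mul_one (1 : A), ← monomial_mul]
    refine mul_monomial_mem _ m₁ le_sup_left ?_
      (monomial_mem_sup_span_of_monotone hc hcmem)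
    rintro m' ⟨hm'deg, hm'⟩
    have hdeg' : (m' + m₁).degree = (∑ r, Finsupp.single (c r) 1 + m₁).degree := by
      simp [hm'deg]
    rw [← hdeg']
    refine ih _ ?_ _ rfl
    have := weight_sq_le_mul_degree (m' + m₁)
    simp only [← hN, hdeg', map_add] at this ⊢
    lia

end Hankel

/-! ### Supports covered by consecutive pairs -/

/-- The set `s` is covered by `k` disjoint pairs `{a, a + 1}` of consecutive natural numbers. -/
def IsCoveredByPairs (k : ℕ) (s : Set ℕ) : Prop :=
  ∃ a : Fin k → ℕ, (∀ i j, i < j → a i + 2 ≤ a j) ∧ ∀ v ∈ s, ∃ j, v = a j ∨ v = a j + 1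

namespace IsCoveredByPairs

variable {k : ℕ} {s t : Set ℕ}

theorem mono (hs : IsCoveredByPairs k s) (hts : t ⊆ s) : IsCoveredByPairs k t := by
  obtain ⟨a, ha, hcover⟩ := hs
  exact ⟨a, ha, fun v hv => hcover v (hts hv)⟩

theorem of_forall_lt (h : ∀ v ∈ s, v < 2 * k) : IsCoveredByPairs k s :=
  ⟨fun j => 2 * j, fun i j (hij : (i : ℕ) < j) => by lia,
    fun v hv => ⟨⟨v / 2, by have := h v hv; lia⟩, by dsimp only; lia⟩⟩

theorem image_succ (hs : IsCoveredByPairs k s) : IsCoveredByPairs k (Nat.succ '' s) := by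
  obtain ⟨a, ha, hcover⟩ := hs
  refine ⟨fun j => a j + 1, fun i j hij => by have := ha i j hij; lia, ?_⟩
  rintro _ ⟨v, hv, rfl⟩
  exact (hcover v hv).imp fun j hj => by lia

theorem insert_zero_insert_one (hs : IsCoveredByPairs k s) :
    IsCoveredByPairs (k + 1) (insert 0 (insert 1 ((· + 2) '' s))) := by
  obtain ⟨a, ha, hcover⟩ := hs
  refine ⟨Fin.cons 0 fun j => a j + 2, fun i j hij => ?_, ?_⟩
  · obtain ⟨j, rfl⟩ := Fin.exists_succ_eq.mpr (Fin.ne_zero_of_lt hij)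
    cases i using Fin.cases with
    | zero => simp
    | succ i => simpa using ha i j (Fin.succ_lt_succ_iff.mp hij)
  · rintro v (rfl | rfl | ⟨v, hv, rfl⟩)
    · exact ⟨0, by simp⟩
    · exact ⟨0, by simp⟩
    · obtain ⟨j, hj⟩ := hcover v hv
      exact ⟨j.succ, by simpa using hj⟩

end IsCoveredByPairs

/-- Encodes a pair of lists by one list whose nonzero entries are covered by few consecutive pairs:
reading `L` from the left, zeros are copied, and each unit of a positive entry of `L` is traded for
a consecutive pair `e + 1, e'` made from the next two entries of `E`; the rest of `E` comes last. -/
def weave : List ℕ → List ℕ → List ℕ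
  | E, [] => E
  | E, 0 :: L => 0 :: weave E L
  | e :: e' :: E, (x + 1) :: L => (e + 1) :: e' :: weave E (x :: L)
  | [], (_ + 1) :: _ => []
  | [_], (_ + 1) :: _ => []
termination_by E L => E.length + L.length

theorem length_weave {E L : List ℕ} (h : 2 * L.sum ≤ E.length) :
    (weave E L).length = E.length + L.length := by
  fun_induction weave E L <;> simp_all <;> lia

theorem sum_weave {E L : List ℕ} (h : 2 * L.sum ≤ E.length) :
    (weave E L).sum = E.sum + L.sum := by
  fun_induction weave E L <;> simp_all <;> lia

theorem isCoveredByPairs_weave {E L : List ℕ} {k : ℕ} (hE : E.length = 2 * k)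
    (hL : L.sum ≤ k) : IsCoveredByPairs k {v | (weave E L).getD v 0 ≠ 0} := by
  fun_induction weave E L generalizing k with
  | case1 E =>
    exact .of_forall_lt fun v hv => by
      by_contra! hlt
      exact hv (List.getD_eq_default _ _ (hE.le.trans hlt))
  | case2 E L ih =>
    refine (ih hE (by simpa using hL)).image_succ.mono ?_
    rintro (_ | v) hv
    · simp at hv
    · exact ⟨v, by simpa using hv, rfl⟩
  | case3 e e' E x L ih =>
    obtain ⟨k, rfl⟩ : ∃ k', k = k' + 1 := ⟨k - 1, by simp at hE; lia⟩
    refine (ih (by simp at hE; lia) (by simp at hL ⊢; lia)).insert_zero_insert_one.mono ?_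
    rintro (_ | _ | v) hv
    · simp
    · simp
    · exact .inr (.inr ⟨v, by simpa using hv, rfl⟩)
  | case4 => simp at hE hL; lia
  | case5 => simp at hE hL; lia

theorem weave_inj : ∀ {E L E' L' : List ℕ}, 2 * L.sum ≤ E.length → 2 * L'.sum ≤ E'.length →
    L.length = L'.length → weave E L = weave E' L' → E = E' ∧ L = L'
  | E, [], E', [], _, _, _, heq => by simpa [weave] using heq
  | E, 0 :: L, E', 0 :: L', h, h', hlen, heq => by
    rw [weave, weave, List.cons_inj_right] at heq
    simpa using weave_inj (by simpa using h) (by simpa using h') (by simpa using hlen) heq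
  | E, 0 :: L, e :: e' :: E', (x + 1) :: L', _, _, _, heq => by simp [weave] at heq
  | e :: e' :: E, (x + 1) :: L, E', 0 :: L', _, _, _, heq => by simp [weave] at heq
  | e :: e' :: E, (x + 1) :: L, f :: f' :: E', (x' + 1) :: L', h, h', hlen, heq => by
    simp only [weave, List.cons.injEq, add_left_inj] at heq
    obtain ⟨rfl, rfl, heq⟩ := heq
    simp only [List.sum_cons, List.length_cons] at h h' hlen
    have := weave_inj (L := x :: L) (L' := x' :: L') (by simp; lia) (by simp; lia)
      (by simpa using hlen) heq
    simpa using this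
  | [], (x + 1) :: L, _, _, h, _, _, _ => by simp at h
  | [e], (x + 1) :: L, _, _, h, _, _, _ => by simp at h; lia
  | _, _, [], (x + 1) :: L, _, h, _, _ => by simp at h
  | _, _, [e], (x + 1) :: L, _, h, _, _ => by simp at h; lia
termination_by E L => E.length + L.length

theorem sum_getD_eq_sum {N : ℕ} {l : List ℕ} (h : l.length = N) :
    ∑ v : Fin N, l.getD v 0 = l.sum := by
  subst h
  simp [← List.sum_ofFn]

theorem exists_injOn_isCoveredByPairs {N k : ℕ} {J : Finset (Fin N)} (hJ : J.card = 2 * k) :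
    ∃ Ψ : (Fin N →₀ ℕ) → (Fin N →₀ ℕ), Set.InjOn Ψ {m | ∑ v ∈ Jᶜ, m v ≤ k} ∧
      ∀ m : Fin N →₀ ℕ, ∑ v ∈ Jᶜ, m v ≤ k → (Ψ m).degree = m.degree ∧
        IsCoveredByPairs k (Fin.val '' {v | Ψ m v ≠ 0}) := by
  let P (m : Fin N →₀ ℕ) : List ℕ := weave (J.toList.map m) (Jᶜ.toList.map m)
  have hle {m : Fin N →₀ ℕ} (hm : ∑ v ∈ Jᶜ, m v ≤ k) :
      2 * (Jᶜ.toList.map m).sum ≤ (J.toList.map m).length := by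
    rw [Finset.sum_map_toList, List.length_map, Finset.length_toList, hJ]
    lia
  have hlen {m : Fin N →₀ ℕ} (hm : ∑ v ∈ Jᶜ, m v ≤ k) : (P m).length = N := by
    rw [length_weave (hle hm), List.length_map, List.length_map, Finset.length_toList,
      Finset.length_toList, Finset.card_add_card_compl, Fintype.card_fin]
  refine ⟨fun m => Finsupp.equivFunOnFinite.symm fun v => (P m).getD v 0, ?_, ?_⟩
  · intro m hm m' hm' heq
    have hP : P m = P m' := by
      refine List.ext_getElem (by rw [hlen hm, hlen hm']) fun i hi hi' => ?_
      simpa [hi, hi'] using DFunLike.congr_fun heq ⟨i, hlen hm ▸ hi⟩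
    obtain ⟨hE, hL⟩ := weave_inj (hle hm) (hle hm') (by simp) hP
    ext v
    by_cases hv : v ∈ J
    · exact List.map_inj_left.mp hE v (Finset.mem_toList.mpr hv)
    · exact List.map_inj_left.mp hL v (by simpa using hv)
  · refine fun m hm => ⟨?_, (isCoveredByPairs_weave (E := J.toList.map m)
      (L := Jᶜ.toList.map m) (by simp [hJ]) (by rwa [Finset.sum_map_toList])).mono ?_⟩
    · rw [Finsupp.degree_eq_sum, Finsupp.degree_eq_sum, ← Finset.sum_add_sum_compl J m]
      simpa [P, sum_weave (hle hm)] using sum_getD_eq_sum (hlen hm)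
    · rintro _ ⟨v, hv, rfl⟩
      simpa using hv

/-! ### The secant map -/

section Secant

variable {A B : Type*} [CommRing A] [CommRing B] [Algebra A B] {k M : ℕ}

/-- The exponent of the monomial `a_j ^ (M - 1 - v) * b_j ^ v`, where `a_j` and `b_j` are the
variables indexed by `Sum.inl j` and `Sum.inr j`. -/
noncomputable def secantExponent (v : Fin M) (j : Fin k) : Fin k ⊕ Fin k →₀ ℕ :=
  Finsupp.single (.inl j) (v.rev : ℕ) + Finsupp.single (.inr j) (v : ℕ)

variable (A B k M) in
/-- The parametrization `x_v ↦ ∑ j, a_j ^ (M - 1 - v) * b_j ^ v` of the variety of `k`-secants of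
the rational normal curve of degree `M - 1`. -/
noncomputable def secantMap : MvPolynomial (Fin M) A →ₐ[A] MvPolynomial (Fin k ⊕ Fin k) B :=
  aeval fun v => ∑ j, monomial (secantExponent v j) 1

theorem secantMap_det_hankelMatrix {n : ℕ} (g : Fin (k + 1) → Fin n) :
    secantMap A B k (n + k) ((hankelMatrix A k n).submatrix id g).det = 0 := by
  let Y (d : ℕ) (j : Fin k) (e : ℕ) : MvPolynomial (Fin k ⊕ Fin k) B :=
    monomial (Finsupp.single (.inl j) (d - e) + Finsupp.single (.inr j) e) 1
  let L : Matrix (Fin (k + 1)) (Fin (k + 1)) (MvPolynomial (Fin k ⊕ Fin k) B) :=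
    .of fun a => Fin.snoc (fun j => Y k j a) 0
  let R : Matrix (Fin (k + 1)) (Fin (k + 1)) (MvPolynomial (Fin k ⊕ Fin k) B) :=
    .of fun j b => Fin.snoc (α := fun _ => _) (fun j => Y (n - 1) j (g b)) 0 j
  have hLR : (secantMap A B k (n + k)).mapMatrix ((hankelMatrix A k n).submatrix id g) = L * R := by
    ext1 a b
    have := a.is_lt
    have := (g b).is_lt
    have hrev : n + k - (a + g b + 1) = (k - a) + (n - 1 - g b) := by lia
    simp only [AlgHom.mapMatrix_apply, map_apply, submatrix_apply, id_eq, hankelMatrix, of_apply,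
      secantMap, aeval_X, secantExponent, Fin.val_rev, hrev, mul_apply, Fin.sum_univ_castSucc, L, R,
      Y, Fin.snoc_castSucc, Fin.snoc_last, mul_zero, add_zero, monomial_mul, mul_one,
      Finsupp.single_add, add_add_add_comm]
  rw [AlgHom.map_det, hLR, det_mul, det_eq_zero_of_column_eq_zero (Fin.last k), zero_mul]
  simp [L]

theorem hankelIdeal_le_ker_secantMap (n : ℕ) :
    hankelIdeal A k n ≤ RingHom.ker (secantMap A B k (n + k)) := by
  rw [hankelIdeal, Ideal.span_le]
  rintro _ ⟨g, rfl⟩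
  exact secantMap_det_hankelMatrix g

theorem coeff_secantMap_monomial {ι : Type*} [Fintype ι] [DecidableEq ι] (c : ι → Fin M)
    (s : Fin k ⊕ Fin k →₀ ℕ) :
    coeff s (secantMap A B k M (monomial (∑ r, Finsupp.single (c r) 1) 1)) =
      (Finset.card {f : ι → Fin k | ∑ r, secantExponent (c r) (f r) = s} : B) := by
  rw [← prod_X_eq_monomial, map_prod]
  simp_rw [secantMap, aeval_X]
  rw [Finset.prod_univ_sum, Fintype.piFinset_univ, coeff_sum]
  simp_rw [← monomial_sum_one, coeff_monomial]
  rw [Finset.sum_boole]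

theorem coeff_secantMap_eq_sum (f : MvPolynomial (Fin M) A) (s : Fin k ⊕ Fin k →₀ ℕ) :
    coeff s (secantMap A B k M f) =
      ∑ m ∈ f.support, coeff m f • coeff s (secantMap A B k M (monomial m 1)) := by
  conv_lhs => rw [f.as_sum, map_sum, coeff_sum]
  refine Finset.sum_congr rfl fun m _ => ?_
  rw [← coeff_smul, ← map_smul, smul_monomial, smul_eq_mul, mul_one]

section Pairs

variable {a : Fin k → ℕ}

theorem mem_pair_of_sum_secantExponent_eq {ι ι' : Type*} [Fintype ι] [Fintype ι'] (hkM : k < M)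
    {c : ι → Fin M} {f : ι → Fin k} {c' : ι' → Fin M} {f' : ι' → Fin k}
    (hc' : ∀ r, (c' r : ℕ) = a (f' r) ∨ (c' r : ℕ) = a (f' r) + 1)
    (heq : ∑ r, secantExponent (c r) (f r) = ∑ r, secantExponent (c' r) (f' r))
    (hle : ∑ r, (c r : ℕ) ^ 2 ≤ ∑ r, (c' r : ℕ) ^ 2) (r : ι) :
    (c r : ℕ) = a (f r) ∨ (c r : ℕ) = a (f r) + 1 := by
  -- the weight `w` is chosen such that `gap` vanishes exactly on the pairs `{a j, a j + 1}`
  let gap (v : Fin M) (j : Fin k) : ℤ := ((v : ℤ) - a j) * (v - a j - 1)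
  let w := Finsupp.weight (R := ℕ) (Sum.elim (fun j => -((a j : ℤ) * (a j + 1)))
    (fun j => ((M : ℤ) - 1) * (2 * a j + 1) - a j * (a j + 1)))
  have hw (v : Fin M) (j : Fin k) : w (secantExponent v j) = (M - 1) * ((v : ℤ) ^ 2 - gap v j) := by
    have hrev : ((v.rev : ℕ) : ℤ) = M - 1 - v := by rw [Fin.val_rev]; omega
    simp only [w, gap, secantExponent, map_add, Finsupp.weight_single, Sum.elim_inl, Sum.elim_inr,
      nsmul_eq_mul, hrev]
    ring
  have hgap_nonneg (v : Fin M) (j : Fin k) : 0 ≤ gap v j := by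
    rcases le_or_gt (v : ℤ) (a j) with h | h
    · exact mul_nonneg_of_nonpos_of_nonpos (by lia) (by lia)
    · exact mul_nonneg (by lia) (by lia)
  have hgap' (r : ι') : gap (c' r) (f' r) = 0 := by
    rcases hc' r with h | h <;> simp [gap, h]
  have hM : ((M : ℤ) - 1) ≠ 0 := by have := (f r).is_lt; lia
  have hsum : ∑ r, ((c r : ℤ) ^ 2 - gap (c r) (f r)) = ∑ r, (c' r : ℤ) ^ 2 := by
    have := congrArg w heq
    simp only [map_sum, hw, hgap', sub_zero, ← Finset.mul_sum] at this
    exact mul_left_cancel₀ hM this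
  have hgap_sum : ∑ r, gap (c r) (f r) ≤ 0 := by
    rw [Finset.sum_sub_distrib] at hsum
    zify at hle
    lia
  have hgap : gap (c r) (f r) = 0 :=
    (Finset.sum_eq_zero_iff_of_nonneg fun _ _ => hgap_nonneg _ _).mp
      (hgap_sum.antisymm (Finset.sum_nonneg fun _ _ => hgap_nonneg _ _)) r (Finset.mem_univ r)
  rcases mul_eq_zero.mp hgap with h | h <;> lia

theorem eq_of_mem_pair (ha : ∀ i j, i < j → a i + 2 ≤ a j) {v : ℕ} {i j : Fin k}
    (hi : v = a i ∨ v = a i + 1) (hj : v = a j ∨ v = a j + 1) : i = j := by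
  rcases lt_trichotomy i j with h | h | h
  · have := ha i j h; lia
  · exact h
  · have := ha j i h; lia

theorem exists_addMonoidHom_secantExponent (ha : ∀ i j, i < j → a i + 2 ≤ a j) (v : Fin M) :
    ∃ Λ : (Fin k ⊕ Fin k →₀ ℕ) →+ ℤ, ∀ (u : Fin M) (i : Fin k),
      ((u : ℕ) = a i ∨ (u : ℕ) = a i + 1) →
        Λ (secantExponent u i) = if u = v then (M : ℤ) - 1 else 0 := by
  by_cases hv : ∃ j, (v : ℕ) = a j ∨ (v : ℕ) = a j + 1
  swap
  · refine ⟨0, fun u i hu => ?_⟩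
    rw [if_neg (fun h : u = v => hv ⟨i, h ▸ hu⟩), AddMonoidHom.zero_apply]
  obtain ⟨j, hj⟩ := hv
  let v' : ℤ := 2 * a j + 1 - v
  refine ⟨Finsupp.weight (R := ℕ) (Sum.elim (fun i => if i = j then (v' - v) * v' else 0)
    (fun i => if i = j then (v - v') * (M - 1 - v') else 0)), fun u i hu => ?_⟩
  have hrev : ((u.rev : ℕ) : ℤ) = M - 1 - u := by rw [Fin.val_rev]; omega
  simp only [secantExponent, map_add, Finsupp.weight_single, Sum.elim_inl, Sum.elim_inr,
    nsmul_eq_mul, hrev]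
  by_cases hij : i = j
  swap
  · have huv : u ≠ v := fun h => hij (eq_of_mem_pair ha (h ▸ hu) hj)
    simp [hij, huv]
  subst hij
  trans (M - 1) * ((v - v') * (u - v'))
  · simp only [if_true]
    ring
  · split_ifs with huv
    · subst huv
      have hsq : ((u : ℤ) - v') * (u - v') = 1 := by
        rcases hj with h | h <;> simp only [v', h] <;> push_cast <;> ring
      rw [hsq, mul_one]
    · have huv' : (u : ℤ) - v' = 0 := by have := Fin.val_ne_of_ne huv; lia
      rw [huv', mul_zero, mul_zero]

theorem sum_single_eq_of_sum_secantExponent_eq {ι ι' : Type*} [Fintype ι] [Fintype ι']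
    (hkM : k < M) (ha : ∀ i j, i < j → a i + 2 ≤ a j)
    {c : ι → Fin M} {f : ι → Fin k} {c' : ι' → Fin M} {f' : ι' → Fin k}
    (hc : ∀ r, (c r : ℕ) = a (f r) ∨ (c r : ℕ) = a (f r) + 1)
    (hc' : ∀ r, (c' r : ℕ) = a (f' r) ∨ (c' r : ℕ) = a (f' r) + 1)
    (heq : ∑ r, secantExponent (c r) (f r) = ∑ r, secantExponent (c' r) (f' r)) :
    ∑ r, Finsupp.single (c r) 1 = ∑ r, Finsupp.single (c' r) 1 := by
  classical
  rcases Nat.eq_zero_or_pos k with rfl | hk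
  · have := Function.isEmpty f
    have := Function.isEmpty f'
    rw [Finset.univ_eq_empty, Finset.univ_eq_empty, Finset.sum_empty, Finset.sum_empty]
  ext v
  obtain ⟨Λ, hΛ⟩ := exists_addMonoidHom_secantExponent ha v
  have h := congrArg Λ heq
  simp_rw [map_sum, hΛ _ _ (hc _), hΛ _ _ (hc' _), ← mul_boole _ ((M : ℤ) - 1), ← Finset.mul_sum]
    at h
  have hM : (M : ℤ) - 1 ≠ 0 := by lia
  simpa [Finsupp.finsetSum_apply, Finsupp.single_apply] using mul_left_cancel₀ hM h

end Pairs

theorem exists_coeff_secantMap_monomial_eq (hkM : k < M) {m₀ : Fin M →₀ ℕ}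
    (hm₀ : IsCoveredByPairs k (Fin.val '' {v | m₀ v ≠ 0})) :
    ∃ s, ∀ m : Fin M →₀ ℕ, Finsupp.weight (fun v : Fin M => (v : ℕ) ^ 2) m ≤
      Finsupp.weight (fun v : Fin M => (v : ℕ) ^ 2) m₀ →
        coeff s (secantMap A B k M (monomial m 1)) = if m = m₀ then 1 else 0 := by
  classical
  obtain ⟨a, ha, hcover⟩ := hm₀
  obtain ⟨d, hd⟩ : ∃ d, m₀.degree = d := ⟨_, rfl⟩
  obtain ⟨c₀, -, rfl⟩ := exists_monotone_sum_single_eq hd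
  have hcover r : ∃ j, (c₀ r : ℕ) = a j ∨ (c₀ r : ℕ) = a j + 1 :=
    hcover _ ⟨c₀ r, by simp [Finsupp.single_apply], rfl⟩
  choose f₀ hf₀ using hcover
  refine ⟨∑ r, secantExponent (c₀ r) (f₀ r), fun m hm => ?_⟩
  have hpair {e} {c : Fin e → Fin M} (hcm : ∑ r, Finsupp.single (c r) 1 = m) {f : Fin e → Fin k}
      (hf : ∑ r, secantExponent (c r) (f r) = ∑ r, secantExponent (c₀ r) (f₀ r)) :
      ∀ r, (c r : ℕ) = a (f r) ∨ (c r : ℕ) = a (f r) + 1 := by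
    subst hcm
    exact mem_pair_of_sum_secantExponent_eq hkM hf₀ hf (by simpa [Finsupp.weight_single] using hm)
  split_ifs with h
  · rw [h, coeff_secantMap_monomial, Finset.card_eq_one.mpr ⟨f₀, ?_⟩, Nat.cast_one]
    refine Finset.eq_singleton_iff_unique_mem.mpr ⟨by simp, fun f hf => funext fun r => ?_⟩
    exact eq_of_mem_pair ha (hpair h.symm (Finset.mem_filter.mp hf).2 r) (hf₀ r)
  · obtain ⟨e, he⟩ : ∃ e, m.degree = e := ⟨_, rfl⟩
    obtain ⟨c, -, rfl⟩ := exists_monotone_sum_single_eq he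
    rw [coeff_secantMap_monomial, Finset.card_eq_zero.mpr, Nat.cast_zero]
    refine Finset.filter_eq_empty_iff.mpr fun f _ hf => h ?_
    exact sum_single_eq_of_sum_secantExponent_eq hkM ha (hpair rfl hf) hf₀ hf

theorem disjoint_restrictSupport_isCoveredByPairs_ker [FaithfulSMul A B] (hkM : k < M) :
    Disjoint (restrictSupport A {m : Fin M →₀ ℕ | IsCoveredByPairs k (Fin.val '' {v | m v ≠ 0})})
      (LinearMap.ker (secantMap A B k M).toLinearMap) := by
  refine Submodule.disjoint_def.mpr fun f hfT hf => ?_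
  by_contra hf0
  obtain ⟨m₀, hm₀, hmax⟩ := f.support.exists_max_image
    (Finsupp.weight (fun v : Fin M => (v : ℕ) ^ 2)) (support_nonempty.mpr hf0)
  obtain ⟨s, hs⟩ := exists_coeff_secantMap_monomial_eq (A := A) (B := B) hkM
    ((mem_restrictSupport_iff A).mp hfT hm₀)
  have hsum : coeff s (secantMap A B k M f) = algebraMap A B (coeff m₀ f) := by
    rw [coeff_secantMap_eq_sum, Finset.sum_eq_single_of_mem m₀ hm₀ fun m hm hne => ?_,
      hs m₀ le_rfl, if_pos rfl, Algebra.smul_def, mul_one]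
    rw [hs m (hmax m hm), if_neg hne, smul_zero]
  have h0 : secantMap A B k M f = 0 := hf
  rw [h0, coeff_zero, eq_comm, FaithfulSMul.algebraMap_eq_zero_iff] at hsum
  exact mem_support_iff.mp hm₀ hsum

end Secant

theorem finrank_restrictSupport {V F : Type*} [Field F] {S : Set (V →₀ ℕ)} :
    Module.finrank F (restrictSupport F S) = S.ncard :=
  Module.finrank_eq_nat_card_basis (basisRestrictSupport F S)

theorem finrank_map_of_disjoint_ker {F P Q : Type*} [Field F] [AddCommGroup P] [Module F P]
    [AddCommGroup Q] [Module F Q] {φ : P →ₗ[F] Q} {S : Submodule F P}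
    (h : Disjoint S (LinearMap.ker φ)) : Module.finrank F (S.map φ) = Module.finrank F S := by
  rw [← LinearMap.injective_domRestrict_iff] at h
  rw [← LinearMap.range_domRestrict, LinearMap.finrank_range_of_inj h]

theorem disjoint_ker_of_finrank_map {F P Q : Type*} [Field F] [AddCommGroup P] [Module F P]
    [AddCommGroup Q] [Module F Q] {φ : P →ₗ[F] Q} {S : Submodule F P} [Module.Finite F S]
    (h : Module.finrank F S ≤ Module.finrank F (S.map φ)) : Disjoint S (LinearMap.ker φ) := by
  rw [← LinearMap.range_domRestrict] at h
  have hrank := (φ.domRestrict S).finrank_range_add_finrank_ker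
  rw [← LinearMap.injective_domRestrict_iff, ← LinearMap.ker_eq_bot,
    ← Submodule.finrank_eq_zero (R := F)]
  lia

theorem disjoint_restrictSupport_ker_of_injOn {V F Q : Type*} [Finite V] [Field F]
    [AddCommGroup Q] [Module F Q] {φ : MvPolynomial V F →ₗ[F] Q} {T U : Set (V →₀ ℕ)}
    {Ψ : (V →₀ ℕ) → (V →₀ ℕ)} (hΨ : Set.InjOn Ψ U) (hΨT : ∀ m ∈ U, Ψ m ∈ T)
    (hΨdeg : ∀ m ∈ U, (Ψ m).degree = m.degree)
    (hT : Disjoint (restrictSupport F T) (LinearMap.ker φ))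
    (hspan : ∀ m : V →₀ ℕ, monomial m 1 ∈
      LinearMap.ker φ ⊔ (restrictSupport F U ⊓ homogeneousSubmodule V F m.degree)) :
    Disjoint (restrictSupport F U) (LinearMap.ker φ) := by
  refine Submodule.disjoint_def.mpr fun f hfU hf => ?_
  let below : Set (V →₀ ℕ) := {m | m.degree ≤ f.totalDegree}
  have hbelow : below.Finite := Finsupp.finite_of_degree_le _
  have hmap : (restrictSupport F (T ∩ below)).map φ ≤ (restrictSupport F (U ∩ below)).map φ := by
    rw [restrictSupport_eq_span, Submodule.map_span_le]
    rintro _ ⟨m, ⟨-, hm⟩, rfl⟩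
    obtain ⟨i, hi, g, ⟨hgU, hg⟩, hig⟩ := Submodule.mem_sup.mp (hspan m)
    beta_reduce
    rw [← hig, map_add, LinearMap.mem_ker.mp hi, zero_add]
    refine Submodule.mem_map_of_mem ((mem_restrictSupport_iff F).mpr ?_)
    refine Set.subset_inter ((mem_restrictSupport_iff F).mp hgU) fun m' hm' => ?_
    have hdeg : m'.degree = m.degree := by
      conv_lhs => rw [Finsupp.degree_eq_weight_one]
      exact hg (mem_support_iff.mp hm')
    exact hdeg.trans_le hm
  have : Finite ↑(U ∩ below) := hbelow.inter_of_right U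
  have : Module.Finite F (restrictSupport F (U ∩ below)) :=
    Module.Finite.of_basis (basisRestrictSupport F _)
  have hdisj : Disjoint (restrictSupport F (U ∩ below)) (LinearMap.ker φ) := by
    refine disjoint_ker_of_finrank_map ?_
    calc Module.finrank F (restrictSupport F (U ∩ below))
        = (U ∩ below).ncard := finrank_restrictSupport
      _ ≤ (T ∩ below).ncard := Set.ncard_le_ncard_of_injOn Ψ
          (fun m hm => ⟨hΨT m hm.1, (hΨdeg m hm.1).trans_le hm.2⟩)
          (hΨ.mono Set.inter_subset_left) (hbelow.inter_of_right T)
      _ = Module.finrank F ((restrictSupport F (T ∩ below)).map φ) := by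
          rw [finrank_map_of_disjoint_ker, finrank_restrictSupport]
          exact hT.mono_left (restrictSupport_mono F Set.inter_subset_left)
      _ ≤ Module.finrank F ((restrictSupport F (U ∩ below)).map φ) :=
          Submodule.finrank_mono hmap
  refine Submodule.disjoint_def.mp hdisj f ((mem_restrictSupport_iff F).mpr ?_) hf
  exact Set.subset_inter ((mem_restrictSupport_iff F).mp hfU) fun m hm => le_totalDegree hm

section SecantMatching

variable {A B : Type*} [CommRing A] [CommRing B] [Algebra A B] {k M : ℕ} {ι ι₀ : Type*}
  [Fintype ι] [Fintype ι₀]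

theorem secantExponent_inl (v : Fin M) (i j : Fin k) :
    secantExponent v i (.inl j) = if i = j then (v.rev : ℕ) else 0 := by
  simp [secantExponent, Finsupp.single_apply, -Fin.val_rev]

theorem secantExponent_inr (v : Fin M) (i j : Fin k) :
    secantExponent v i (.inr j) = if i = j then (v : ℕ) else 0 := by
  simp [secantExponent, Finsupp.single_apply]

theorem sum_secantExponent_apply {c : ι → Fin M} {f : ι → Fin k} (hf : Function.Injective f)
    (r : ι) : (∑ r', secantExponent (c r') (f r')) (.inl (f r)) = (c r).rev ∧
      (∑ r', secantExponent (c r') (f r')) (.inr (f r)) = c r := by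
  classical
  simp [Finsupp.finsetSum_apply, secantExponent_inl, secantExponent_inr, hf.eq_iff]

theorem exists_eq_of_secantExponent_le (hkM : k < M) {c : ι → Fin M} {f : ι → Fin k}
    (hf : Function.Injective f) {v : Fin M} {j : Fin k}
    (h : secantExponent v j ≤ ∑ r, secantExponent (c r) (f r)) : ∃ r, f r = j ∧ c r = v := by
  have hjk := j.is_lt
  have hinl := h (.inl j)
  have hinr := h (.inr j)
  rw [secantExponent_inl, if_pos rfl] at hinl
  rw [secantExponent_inr, if_pos rfl] at hinr
  by_cases hj : ∃ r, f r = j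
  · obtain ⟨r, rfl⟩ := hj
    rw [(sum_secantExponent_apply hf r).1] at hinl
    rw [(sum_secantExponent_apply hf r).2] at hinr
    rw [Fin.val_rev, Fin.val_rev] at hinl
    exact ⟨r, rfl, Fin.ext (by lia)⟩
  · push Not at hj
    simp only [Finsupp.finsetSum_apply, secantExponent_inl, secantExponent_inr, hj, if_false,
      Finset.sum_const_zero, Fin.val_rev] at hinl hinr
    lia

theorem degree_secantExponent (v : Fin M) (j : Fin k) :
    (secantExponent v j).degree = M - 1 := by
  simp only [secantExponent, map_add, Finsupp.degree_single, Fin.val_rev]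
  lia

theorem sum_secantExponent_eq_iff (hkM : k < M) {c₀ : ι₀ → Fin M} {f₀ : ι₀ → Fin k}
    (hf₀ : Function.Injective f₀) {c : ι → Fin M} {f : ι → Fin k} :
    ∑ r, secantExponent (c r) (f r) = ∑ r, secantExponent (c₀ r) (f₀ r) ↔
      ∃ e : ι ≃ ι₀, f = f₀ ∘ e ∧ c = c₀ ∘ e := by
  refine ⟨fun h => ?_, ?_⟩
  · have hle (r : ι) : ∃ r₀, f₀ r₀ = f r ∧ c₀ r₀ = c r := by
      refine exists_eq_of_secantExponent_le hkM hf₀ ?_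
      rw [← h]
      exact Finset.single_le_sum (f := fun r => secantExponent (c r) (f r)) (fun _ _ => zero_le)
        (Finset.mem_univ r)
    choose e hfe hce using hle
    have hsurj : Function.Surjective e := fun r₀ => by
      by_contra! hr₀
      have hne (r : ι) : f r ≠ f₀ r₀ := fun hr => hr₀ r (hf₀ ((hfe r).trans hr))
      have hinl := DFunLike.congr_fun h (.inl (f₀ r₀))
      have hinr := DFunLike.congr_fun h (.inr (f₀ r₀))
      rw [(sum_secantExponent_apply hf₀ r₀).1, Fin.val_rev] at hinl
      rw [(sum_secantExponent_apply hf₀ r₀).2] at hinr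
      simp only [Finsupp.finsetSum_apply, secantExponent_inl, secantExponent_inr, hne, if_false,
        Finset.sum_const_zero] at hinl hinr
      have hpos := (f₀ r₀).is_lt
      lia
    have hcard : Fintype.card ι = Fintype.card ι₀ := by
      rcases isEmpty_or_nonempty ι₀ with _ | ⟨⟨r₀⟩⟩
      · have := Function.isEmpty e
        rw [Fintype.card_eq_zero, Fintype.card_eq_zero]
      have hpos := (f₀ r₀).is_lt
      have hdeg := congrArg Finsupp.degree h
      simp only [map_sum, degree_secantExponent, Finset.sum_const, smul_eq_mul] at hdeg
      exact Nat.eq_of_mul_eq_mul_right (by lia) hdeg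
    exact ⟨.ofBijective e (hsurj.bijective_of_nat_card_le (by simp [hcard])),
      funext fun r => (hfe r).symm, funext fun r => (hce r).symm⟩
  · rintro ⟨e, rfl, rfl⟩
    exact e.sum_comp fun r => secantExponent (c₀ r) (f₀ r)

theorem exists_dvd_factorial_coeff_secantMap_monomial_eq (hkM : k < M)
    {c : ι → Fin M} {f : ι → Fin k} (hf : Function.Injective f) :
    ∃ N : ℕ, N ∣ k.factorial ∧ coeff (∑ r, secantExponent (c r) (f r))
      (secantMap A B k M (monomial (∑ r, Finsupp.single (c r) 1) 1)) = N := by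
  classical
  refine ⟨_, ?_, coeff_secantMap_monomial c _⟩
  have hcard : Finset.card {f' : ι → Fin k | ∑ r, secantExponent (c r) (f' r) =
      ∑ r, secantExponent (c r) (f r)} = Fintype.card {e : Equiv.Perm ι // c ∘ e = c} := by
    rw [← Fintype.card_subtype]
    refine (Fintype.card_of_bijective (f := fun e : {e : Equiv.Perm ι // c ∘ e = c} =>
      ⟨f ∘ e.1, (sum_secantExponent_eq_iff hkM hf).mpr ⟨e.1, rfl, e.2.symm⟩⟩) ⟨?_, ?_⟩).symm
    · intro e e' h
      exact Subtype.ext (Equiv.ext fun r => hf (congrFun (congrArg Subtype.val h) r))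
    · rintro ⟨f', hf'⟩
      obtain ⟨e, rfl, he⟩ := (sum_secantExponent_eq_iff hkM hf).mp hf'
      exact ⟨⟨e, he.symm⟩, rfl⟩
  rw [hcard, DomMulAct.stabilizer_card]
  refine (Nat.prod_factorial_dvd_factorial_sum _ _).trans (Nat.factorial_dvd_factorial ?_)
  rw [← Fintype.card_sigma, Fintype.card_congr (Equiv.sigmaFiberEquiv c)]
  simpa using Fintype.card_le_of_injective f hf

theorem coeff_secantMap_monomial_eq_zero (hkM : k < M) {c₀ : ι₀ → Fin M} {f₀ : ι₀ → Fin k}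
    (hf₀ : Function.Injective f₀) {c : ι → Fin M}
    (hc : ∑ r, Finsupp.single (c r) 1 ≠ ∑ r, Finsupp.single (c₀ r) 1) :
    coeff (∑ r, secantExponent (c₀ r) (f₀ r))
      (secantMap A B k M (monomial (∑ r, Finsupp.single (c r) 1) 1)) = 0 := by
  classical
  rw [coeff_secantMap_monomial, Finset.card_eq_zero.mpr, Nat.cast_zero]
  refine Finset.filter_eq_empty_iff.mpr fun f _ hf => hc ?_
  obtain ⟨e, -, rfl⟩ := (sum_secantExponent_eq_iff hkM hf₀).mp hf
  exact e.sum_comp fun r => Finsupp.single (c₀ r) 1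

theorem coeff_eq_zero_of_mem_span_secantMap_X (hkM : k < M) {c : ι → Fin M} {f : ι → Fin k}
    (hf : Function.Injective f) {J : Set (Fin M)} (hc : ∀ r, c r ∉ J)
    {g : MvPolynomial (Fin k ⊕ Fin k) B}
    (hg : g ∈ Ideal.span ((fun v => secantMap A B k M (X v)) '' J)) :
    coeff (∑ r, secantExponent (c r) (f r)) g = 0 := by
  have hle : Ideal.span ((fun v => secantMap A B k M (X v)) '' J) ≤ Ideal.span
      ((fun s => monomial s 1) '' {s | ∃ v ∈ J, ∃ j : Fin k, s = secantExponent v j}) := by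
    rw [Ideal.span_le]
    rintro _ ⟨v, hv, rfl⟩
    simp only [secantMap, aeval_X]
    exact Ideal.sum_mem _ fun j _ => Ideal.subset_span ⟨_, ⟨v, hv, j, rfl⟩, rfl⟩
  by_contra hne
  obtain ⟨_, ⟨v, hv, j, rfl⟩, hs⟩ :=
    mem_ideal_span_monomial_image.mp (hle hg) _ (mem_support_iff.mpr hne)
  obtain ⟨r, -, rfl⟩ := exists_eq_of_secantExponent_le hkM hf hs
  exact hc r hv

end SecantMatching

theorem eq_zero_of_secantMap_mem_span {A B : Type*} [CommRing A] [CommRing B] [Algebra A B]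
    [FaithfulSMul A B] [NoZeroDivisors B] {k M : ℕ} (hk : (k.factorial : B) ≠ 0) (hkM : k < M)
    {J : Set (Fin M)} {β : MvPolynomial (Fin M) A}
    (hβ : ∀ m ∈ β.support, m.degree ≤ k ∧ ∀ v ∈ J, m v = 0)
    (hmem : secantMap A B k M β ∈ Ideal.span ((fun v => secantMap A B k M (X v)) '' J)) :
    β = 0 := by
  by_contra hβ0
  obtain ⟨m₀, hm₀⟩ := support_nonempty.mpr hβ0
  obtain ⟨hdeg, hJ⟩ := hβ m₀ hm₀
  obtain ⟨d, hd⟩ : ∃ d, m₀.degree = d := ⟨_, rfl⟩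
  obtain ⟨c₀, -, rfl⟩ := exists_monotone_sum_single_eq hd
  have hf₀ := Fin.castLE_injective (hd ▸ hdeg)
  have hcJ (r : Fin d) : c₀ r ∉ J := fun hr => by
    have := hJ _ hr
    simp only [Finsupp.finsetSum_apply, Finset.sum_eq_zero_iff] at this
    simpa using this r
  obtain ⟨N, ⟨q, hq⟩, hN⟩ :=
    exists_dvd_factorial_coeff_secantMap_monomial_eq (A := A) (B := B) hkM (c := c₀) hf₀
  have hcoeff := coeff_eq_zero_of_mem_span_secantMap_X hkM hf₀ hcJ hmem
  rw [coeff_secantMap_eq_sum, Finset.sum_eq_single_of_mem _ hm₀ fun m _ hm => ?_, hN,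
    Algebra.smul_def, mul_eq_zero, FaithfulSMul.algebraMap_eq_zero_iff] at hcoeff
  · rcases hcoeff with h | h
    · exact mem_support_iff.mp hm₀ h
    · exact hk (by rw [hq, Nat.cast_mul, h, zero_mul])
  · obtain ⟨e, he⟩ : ∃ e, m.degree = e := ⟨_, rfl⟩
    obtain ⟨c, -, rfl⟩ := exists_monotone_sum_single_eq he
    rw [coeff_secantMap_monomial_eq_zero hkM hf₀ hm, smul_zero]

section HankelIdeal

variable {k n : ℕ}

theorem card_endIndices (hkn : k ≤ n) : (endIndices k n).card = 2 * k := by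
  have hmap : (endIndices k n).map Fin.valEmbedding =
      Finset.range k ∪ Finset.Ico n (n + k) := by
    ext i
    simp only [endIndices, Finset.mem_map, Finset.mem_filter_univ, Fin.valEmbedding_apply,
      Finset.mem_union, Finset.mem_range, Finset.mem_Ico, Fin.exists_iff]
    exact ⟨by lia, fun hi => ⟨i, by lia, by lia, rfl⟩⟩
  have hdisj : Disjoint (Finset.range k) (Finset.Ico n (n + k)) :=
    Finset.disjoint_left.mpr fun i hi hi' => by
      simp only [Finset.mem_range, Finset.mem_Ico] at hi hi'
      lia
  rw [← Finset.card_map Fin.valEmbedding, hmap, Finset.card_union_of_disjoint hdisj,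
    Finset.card_range, Nat.card_Ico]
  lia

theorem single_add_mem_standardExponents {v : Fin (n + k)} (hv : v ∈ endIndices k n)
    {m : Fin (n + k) →₀ ℕ} (hm : m ∈ standardExponents k n) :
    Finsupp.single v 1 + m ∈ standardExponents k n := by
  have hsum : ∑ w ∈ (endIndices k n)ᶜ, (Finsupp.single v 1 + m : Fin (n + k) →₀ ℕ) w =
      ∑ w ∈ (endIndices k n)ᶜ, m w := Finset.sum_congr rfl fun w hw => by
    have hvw : v ≠ w := fun h => Finset.mem_compl.mp hw (h ▸ hv)
    rw [Finsupp.add_apply, Finsupp.single_eq_of_ne hvw.symm, zero_add]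
  exact hsum.trans_le hm

theorem disjoint_restrictSupport_standardExponents_ker {F B : Type*} [Field F] [CommRing B]
    [Nontrivial B] [Algebra F B] (hkn : k < n) :
    Disjoint (restrictSupport F (standardExponents k n))
      (LinearMap.ker (secantMap F B k (n + k)).toLinearMap) := by
  obtain ⟨Ψ, hΨ, hΨpairs⟩ := exists_injOn_isCoveredByPairs (card_endIndices hkn.le)
  exact disjoint_restrictSupport_ker_of_injOn hΨ (fun m hm => (hΨpairs m hm).2)
    (fun m hm => (hΨpairs m hm).1) (disjoint_restrictSupport_isCoveredByPairs_ker (by lia))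
    fun m => sup_le_sup_right (a := (hankelIdeal F k n).restrictScalars F)
      (hankelIdeal_le_ker_secantMap n) _ (monomial_mem_sup_standardExponents m)

theorem exists_isNormalForm_hankelIdeal (F : Type*) [Field F] (hkn : k < n) :
    ∃ ν, IsNormalForm (hankelIdeal F k n) (endIndices k n) ν :=
  exists_isNormalForm (fun _ hv _ => single_add_mem_standardExponents hv)
    monomial_mem_sup_standardExponents
    ((disjoint_restrictSupport_standardExponents_ker (B := F) hkn).mono_right
      (hankelIdeal_le_ker_secantMap n))

theorem ker_secantMap (F B : Type*) [Field F] [CommRing B] [Nontrivial B] [Algebra F B]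
    (hkn : k < n) : RingHom.ker (secantMap F B k (n + k)) = hankelIdeal F k n := by
  refine Submodule.restrictScalars_injective F _ _ (Eq.symm ?_)
  refine eq_of_le_of_inf_le_of_sup_le (z := restrictSupport F (standardExponents k n))
    (hankelIdeal_le_ker_secantMap n) ?_ ?_
  · exact (disjoint_restrictSupport_standardExponents_ker hkn).symm.eq_bot.trans_le bot_le
  · exact le_top.trans_eq
      (codisjoint_restrictSupport monomial_mem_sup_standardExponents).symm.eq_top.symm

theorem restrictSupport_standardExponents_le (A : Type*) [CommRing A] :
    restrictSupport A (standardExponents k n) ≤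
      (Ideal.span (X '' endIndices k n)).restrictScalars A ⊔
        restrictSupport A {m | m.degree ≤ k ∧ ∀ v ∈ (endIndices k n : Set _), m v = 0} := by
  intro f hf
  refine mem_of_forall_monomial_mem fun m hm => ?_
  have hmk := (mem_restrictSupport_iff A).mp hf hm
  by_cases hmJ : ∀ v ∈ endIndices k n, m v = 0
  · have hdeg : m.degree = ∑ v ∈ (endIndices k n)ᶜ, m v := by
      rw [Finsupp.degree_eq_sum, ← Finset.sum_add_sum_compl (endIndices k n),
        Finset.sum_eq_zero hmJ, zero_add]
    refine Submodule.mem_sup_right ((mem_restrictSupport_iff A).mpr fun m' hm' => ?_)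
    rw [Finset.mem_singleton.mp (support_monomial_subset hm')]
    exact ⟨hdeg.trans_le hmk, hmJ⟩
  · push Not at hmJ
    refine Submodule.mem_sup_left (mem_ideal_span_X_image.mpr fun m' hm' => ?_)
    rwa [Finset.mem_singleton.mp (support_monomial_subset hm')]

theorem comap_map_span_X_endIndices_le {F B : Type*} [Field F] [CommRing B]
    [NoZeroDivisors B] [Algebra F B] (hk : (k.factorial : B) ≠ 0) (hkn : k < n) :
    ((Ideal.span (X '' endIndices k n)).map (secantMap F B k (n + k))).comap
        (secantMap F B k (n + k)) ≤ hankelIdeal F k n ⊔ Ideal.span (X '' endIndices k n) := by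
  have := nontrivial_of_ne _ _ hk
  intro f hf
  obtain ⟨g, i, hg, hi, rfl⟩ := Submodule.codisjoint_iff_exists_add_eq.mp
    (codisjoint_restrictSupport monomial_mem_sup_standardExponents) f
  obtain ⟨y, hy, r, hr, rfl⟩ := Submodule.mem_sup.mp (restrictSupport_standardExponents_le F hg)
  have hi0 : secantMap F B k (n + k) i = 0 := hankelIdeal_le_ker_secantMap n hi
  rw [Ideal.mem_comap, map_add, map_add, hi0, add_zero] at hf
  have hr0 : r = 0 := by
    refine eq_zero_of_secantMap_mem_span hk (by lia) ((mem_restrictSupport_iff F).mp hr) ?_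
    rw [← Set.image_image, ← Ideal.map_span]
    exact (Ideal.add_mem_iff_right _ (Ideal.mem_map_of_mem _ hy)).mp hf
  rw [hr0, add_zero, add_comm y]
  exact Submodule.add_mem_sup hi hy

end HankelIdeal

theorem hankel_F_rational_general {F : Type*} [Field F] {p k n : ℕ} [CharP F p]
    (hkp : k < p) (hkn : k < n) (f : Fin (2 * k) → MvPolynomial (Fin (n + k)) F ⧸ hankelIdeal F k n)
    (hf : IsArtinianRing
      ((MvPolynomial (Fin (n + k)) F ⧸ hankelIdeal F k n) ⧸ Ideal.span (Set.range f))) :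
    IsTightlyClosed p (Ideal.span (Set.range f)) := by
  have hp : p.Prime := (CharP.char_is_prime_or_zero F p).resolve_right (by lia)
  have : Fact p.Prime := ⟨hp⟩
  let K := AlgebraicClosure F
  have : CharP K p := charP_of_injective_algebraMap (algebraMap F K).injective p
  have : PerfectRing K p := PerfectField.toPerfectRing p
  have hker := ker_secantMap F K hkn
  have : Nontrivial (MvPolynomial (Fin (n + k)) F ⧸ hankelIdeal F k n) :=
    Ideal.Quotient.nontrivial_iff.mpr (hker ▸ RingHom.ker_ne_top _)
  have : CharP (MvPolynomial (Fin (n + k)) F ⧸ hankelIdeal F k n) p :=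
    charP_of_injective_algebraMap (algebraMap F _).injective p
  have : Nonempty (Fin (n + k)) := ⟨⟨k, by lia⟩⟩
  have hk : (k.factorial : K) ≠ 0 := by
    rwa [Ne, CharP.cast_eq_zero_iff K p, hp.dvd_factorial, not_le]
  obtain ⟨ν, hν⟩ := exists_isNormalForm_hankelIdeal F hkn
  refine hν.isTightlyClosed_of_isArtinianRing ?_ (card_endIndices hkn.le) f hf
  rw [← Set.image_image (Ideal.Quotient.mk _), ← Ideal.map_span]
  refine IsTightlyClosed.map_mk_of_ker_eq (φ := (secantMap F K k (n + k)).toRingHom) hker ?_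
    (comap_map_span_X_endIndices_le hk hkn)
  exact fun c x hc hx => mem_of_frequently_mul_pow_mem_frobeniusPower p hc hx

/-- Over a field of characteristic `p ≥ t`, the Hankel determinantal ring
`R = F[x_1,...,x_{n+t-1}]/I_t(H)` is `F`-rational: every ideal generated by a system of
parameters (a family of `2t-2 = dim R` elements whose quotient is Artinian) is tightly
closed. -/
theorem hankel_F_rational (F : Type*) [Field F] (p t n : ℕ) [CharP F p]
    (hp : p.Prime) (hpt : t ≤ p) (ht : 2 ≤ t) (htn : t ≤ n)
    (H : Matrix (Fin t) (Fin n) (MvPolynomial (Fin (n + t - 1)) F))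
    (hH : ∀ a b, H a b = X ⟨(a : ℕ) + (b : ℕ), by have := a.2; have := b.2; omega⟩)
    (I : Ideal (MvPolynomial (Fin (n + t - 1)) F))
    (hI : I = Ideal.span (Set.range fun g : Fin t → Fin n => (H.submatrix id g).det)) :
    ∀ f : Fin (2 * t - 2) → (MvPolynomial (Fin (n + t - 1)) F ⧸ I),
      IsArtinianRing ((MvPolynomial (Fin (n + t - 1)) F ⧸ I) ⧸ Ideal.span (Set.range f)) →
      ∀ x : MvPolynomial (Fin (n + t - 1)) F ⧸ I,
        (∃ c : MvPolynomial (Fin (n + t - 1)) F ⧸ I, c ≠ 0 ∧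
          ∀ e : ℕ, c * x ^ (p ^ e) ∈ frobeniusPower (p ^ e) (Ideal.span (Set.range f))) →
        x ∈ Ideal.span (Set.range f) := by
  obtain ⟨k, rfl⟩ := Nat.exists_eq_add_of_le' (one_le_two.trans ht)
  obtain rfl : H = hankelMatrix F k n := Matrix.ext hH
  subst hI
  exact fun f hf x ⟨c, hc, hx⟩ => hankel_F_rational_general hpt htn f hf c x hc (.of_forall hx)
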